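/- Under Conditions (A)–(D) with b_j ≠ 0 for all j ≥ 1, let Q(V) = lim_{k→∞} k⁻¹ log 𝔼_u exp(Σ_{n=1}^k V(u_n)) (which exists and is independent of u ∈ 𝒜), and let I : 𝒫(𝒜) → [0,+∞] be its Legendre transform, I(σ) = sup_{W ∈ C(𝒜)} (⟨W,σ⟩ − Q(W)). Then for every V ∈ 𝒱 there exists a unique measure σ_V ∈ 𝒫(𝒜) such that Q(V) = ⟨V, σ_V⟩ − I(σ_V); moreover σ_V = h_V μ_V, where (λ_V, h_V, μ_V) ∈ ℝ₊ × C₊(𝒜) × 𝒫(𝒜) is the eigen-triple of the semigroup 𝔓_k^V, i.e. 𝔓₁^V h_V = λ_V h_V, 𝔓₁^{V*} μ_V = λ_V μ_V, ⟨h_V, μ_V⟩ = 1. -/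

import Mathlib

open MeasureTheory ProbabilityTheory Filter Topology BoundedContinuousFunction
open scoped ENNReal NNReal Pointwise

noncomputable section

/-- The sets `𝒜_k(B)`: `𝒜_0(B) = B`, `𝒜_k(B) = S(𝒜_{k-1}(B)) + 𝒦`. -/
def attain {H : Type*} [AddCommGroup H] (S : H → H) (K : Set H) (B : Set H) : ℕ → Set H
  | 0 => B
  | n + 1 => S '' attain S K B n + K

/-- The domain of attainability `𝒜(B)` from `B`: the closure of `⋃_k 𝒜_k(B)`. -/
def attainDom {H : Type*} [AddCommGroup H] [TopologicalSpace H]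
    (S : H → H) (K : Set H) (B : Set H) : Set H :=
  closure (⋃ n, attain S K B n)

variable {H : Type} [NormedAddCommGroup H] [InnerProductSpace ℝ H] [CompleteSpace H]

/-- The orthogonal projection `𝖯_N` onto the span of the first `N` vectors of an orthonormal
basis. -/
def projB (e : HilbertBasis ℕ ℝ H) (N : ℕ) (u : H) : H :=
  ∑ j ∈ Finset.range N, e.repr u j • (e j : H)

/-- Condition (A): regularity and stability. -/
def CondA (S : H → H) : Prop :=
  ContDiff ℝ 1 S ∧
  ∀ R r : ℝ, 0 < r → r < R →
    ∃ C : ℝ, 0 < C ∧ ∃ a : ℝ, 0 < a ∧ a < 1 ∧ ∃ n₀ : ℕ, 1 ≤ n₀ ∧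
      (∀ u₁ ∈ Metric.closedBall (0 : H) R, ∀ u₂ ∈ Metric.closedBall (0 : H) R,
          ‖S u₁ - S u₂‖ ≤ C * ‖u₁ - u₂‖) ∧
      ∀ u ∈ Metric.closedBall (0 : H) R, ∀ n : ℕ, n₀ ≤ n →
          ‖S^[n] u‖ ≤ max (a * ‖u‖) r

/-- Condition (B): dissipativity. -/
def CondB (S : H → H) (K : Set H) : Prop :=
  ∃ ρ : ℝ, 0 < ρ ∧ ∃ k₀ : ℝ → ℕ, Monotone k₀ ∧
    ∀ R : ℝ, 0 ≤ R → ∀ k : ℕ, k₀ R ≤ k →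
      attain S K (Metric.closedBall 0 R) k ⊆ Metric.closedBall (0 : H) ρ

/-- Condition (C): squeezing. -/
def CondC (S : H → H) (e : HilbertBasis ℕ ℝ H) : Prop :=
  ∀ R : ℝ, 0 < R → ∃ γ : ℕ → ℝ, (∀ N, 0 < γ N) ∧ Antitone γ ∧
    Tendsto γ atTop (𝓝 0) ∧
    ∀ N : ℕ, ∀ u₁ ∈ Metric.closedBall (0 : H) R, ∀ u₂ ∈ Metric.closedBall (0 : H) R,
      ‖(S u₁ - S u₂) - projB e N (S u₁ - S u₂)‖ ≤ γ N * ‖u₁ - u₂‖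

/-- Condition (D): structure of the noise, `η_k = ∑_j b_j ξ_{jk} e_j` with `∑ b_j² < ∞`,
independent scalar `ξ_{jk}` whose laws have Lipschitz densities `p_j` with `p_j(0) > 0` and
support in `[-1,1]`. -/
def CondD [MeasurableSpace H] {Ω : Type*} [MeasurableSpace Ω] (P : Measure Ω)
    (e : HilbertBasis ℕ ℝ H) (η : ℕ → Ω → H)
    (b : ℕ → ℝ) (ξ : ℕ → ℕ → Ω → ℝ) (p : ℕ → ℝ → ℝ) : Prop :=
  (∀ j, 0 ≤ b j) ∧ Summable (fun j => (b j) ^ 2) ∧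
  (∀ k ω, HasSum (fun j => (b j * ξ j k ω) • (e j : H)) (η k ω)) ∧
  (∀ j k, Measurable (ξ j k)) ∧
  iIndepFun (fun jk : ℕ × ℕ => ξ jk.1 jk.2) P ∧
  (∀ j k, Measure.map (ξ j k) P
      = (volume : Measure ℝ).withDensity fun x => ENNReal.ofReal (p j x)) ∧
  (∀ j, ∃ L : ℝ≥0, LipschitzWith L (p j)) ∧
  (∀ j, 0 < p j 0) ∧
  (∀ j, Function.support (p j) ⊆ Set.Icc (-1 : ℝ) 1)

/-- The trajectory `u_k = S(u_{k-1}) + η_k` of the random dynamical system issued from `u₀`. -/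
def traj {Ω : Type*} (S : H → H) (η : ℕ → Ω → H) (u₀ : Ω → H) : ℕ → Ω → H
  | 0 => u₀
  | k + 1 => fun ω => S (traj S η u₀ k ω) + η (k + 1) ω

/-- The (topological) support of a measure. -/
def msupp {X : Type*} [TopologicalSpace X] [MeasurableSpace X] (μ : Measure X) : Set X :=
  {x | ∀ U ∈ 𝓝 x, 0 < μ U}

/-- The occupation measures `ζ_k = k⁻¹ ∑_{n=0}^{k-1} δ_{x_n}` of a sequence. -/
def occ {X : Type*} [MeasurableSpace X] (x : ℕ → X) (k : ℕ) : ProbabilityMeasure X :=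
  if hk : k = 0 then ⟨Measure.dirac (x 0), Measure.dirac.isProbabilityMeasure⟩
  else
    ⟨(k : ℝ≥0∞)⁻¹ • ∑ n ∈ Finset.range k, Measure.dirac (x n), by
      refine ⟨?_⟩
      simp only [Measure.smul_apply, Measure.finset_sum_apply, measure_univ,
        Finset.sum_const, Finset.card_range, nsmul_eq_mul, mul_one, smul_eq_mul]
      exact ENNReal.inv_mul_cancel (Nat.cast_ne_zero.mpr hk) (ENNReal.natCast_ne_top k)⟩

/-- Large deviation principle for the sequence of events `prob k` (the laws of random
probability measures in `Z`), with rate function `I`. -/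
def LDPof {Z : Type*} [TopologicalSpace Z] (prob : ℕ → Set Z → ℝ≥0∞) (I : Z → ℝ≥0∞) : Prop :=
  (∀ F : Set Z, IsClosed F →
    Filter.limsup (fun k : ℕ => (((k : ℝ)⁻¹ : ℝ) : EReal) * ENNReal.log (prob k F)) atTop
      ≤ -(⨅ σ ∈ F, (I σ : EReal))) ∧
  (∀ G : Set Z, IsOpen G →
    -(⨅ σ ∈ G, (I σ : EReal))
      ≤ Filter.liminf (fun k : ℕ => (((k : ℝ)⁻¹ : ℝ) : EReal) * ENNReal.log (prob k G)) atTop)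

/-- A good rate function: lower semicontinuous with compact level sets. -/
def GoodRate {Z : Type*} [TopologicalSpace Z] (I : Z → ℝ≥0∞) : Prop :=
  LowerSemicontinuous I ∧ ∀ c : ℝ≥0∞, c ≠ ⊤ → IsCompact {σ : Z | I σ ≤ c}

/-- The Feynman–Kac semigroup `𝔓_k^V f(u) = 𝔼_u [f(u_k) exp(∑_{n=1}^k V(u_n))]`. -/
def FK {H : Type} [NormedAddCommGroup H] [InnerProductSpace ℝ H] [CompleteSpace H]
    {Ω : Type} [MeasurableSpace Ω] (P : Measure Ω)
    (S : H → H) (η : ℕ → Ω → H) (V : H → ℝ) (k : ℕ) (f : H → ℝ) (u : H) : ℝ :=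
  ∫ ω, f (traj S η (fun _ => u) k ω) *
    Real.exp (∑ n ∈ Finset.Icc 1 k, V (traj S η (fun _ => u) n ω)) ∂P

/-- The dual `𝔓_1^{V*}` of the Feynman–Kac semigroup, acting on measures:
`𝔓_1^{V*}μ (Γ) = ∫_H 𝔼 [1_Γ(S u + η₁) e^{V(S u + η₁)}] μ(du)`. -/
def dualFK1 {H : Type} [NormedAddCommGroup H] [InnerProductSpace ℝ H] [CompleteSpace H]
    [MeasurableSpace H] {Ω : Type} [MeasurableSpace Ω] (P : Measure Ω)
    (S : H → H) (η : ℕ → Ω → H) (V : H → ℝ) (μ : Measure H) : Measure H :=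
  (μ.bind fun u => Measure.map (fun ω => S u + η 1 ω) P).withDensity
    fun x => ENNReal.ofReal (Real.exp (V x))

/-!
The attainable domain `𝒜` is compact, so the Feynman–Kac operator `T = 𝔓₁^V` acts on `C(𝒜)`.
Condition (C) contracts all modes beyond a large `N`, and the Lipschitz densities of the noise
smooth the first `N` modes, which include those `V` depends on; together they give a
Doeblin–Fortet (Lasota–Yorke) inequality for `T`, hence equicontinuity of its normalised iterates.
Since `0` lies in the support of the noise and every orbit of `S` tends to `0`, each point of `𝒜`
can be steered into any open set meeting `𝒜`, so `T` is irreducible. Maximising `s` subject to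
`s g ≤ T g` over nonnegative Lipschitz functions `g` then produces a positive eigenfunction `h`.

The Doob transform `f ↦ (λ h)⁻¹ T (h f)` is a Markov operator inheriting both properties. It thus
has exactly one invariant measure `ν`, and the dual eigenmeasure of `T` is `ν / h`. Finally `σ` is
an equilibrium state for `V` iff it is invariant under the Doob transform `M`: the potentials
`V + g - log (M e^g)` all have the same pressure, so maximality of `⟨W, σ⟩ - Q(W)` at `W = V`
yields, to first order in `g`, that `σ` is invariant; the converse is Jensen's inequality.
-/

section ContinuousMaps

variable {X : Type*} [TopologicalSpace X]

/-- The pointwise exponential of a continuous function. Strictly positive continuous functions are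
parametrised as `expMap φ`, so that their inverses and logarithms stay continuous functions. -/
def expMap (φ : C(X, ℝ)) : C(X, ℝ) := ⟨fun x => Real.exp (φ x), by fun_prop⟩

@[simp]
theorem expMap_apply (φ : C(X, ℝ)) (x : X) : expMap φ x = Real.exp (φ x) := rfl

theorem expMap_zero : expMap (0 : C(X, ℝ)) = 1 := ContinuousMap.ext fun _ => Real.exp_zero

theorem expMap_add (φ ψ : C(X, ℝ)) : expMap (φ + ψ) = expMap φ * expMap ψ :=
  ContinuousMap.ext fun _ => Real.exp_add _ _

theorem expMap_mul_expMap_neg (φ : C(X, ℝ)) : expMap φ * expMap (-φ) = 1 := by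
  rw [← expMap_add, add_neg_cancel, expMap_zero]

theorem expMap_neg_mul_expMap (φ : C(X, ℝ)) : expMap (-φ) * expMap φ = 1 := by
  rw [mul_comm, expMap_mul_expMap_neg]

theorem exists_expMap_eq {f : C(X, ℝ)} (hf : ∀ x, 0 < f x) : ∃ φ, expMap φ = f :=
  ⟨⟨fun x => Real.log (f x), f.continuous.log fun x => (hf x).ne'⟩,
    ContinuousMap.ext fun x => Real.exp_log (hf x)⟩

theorem isClosed_setOf_continuousMap_le {Y : Type*} [TopologicalSpace Y] {F G : Y → C(X, ℝ)}
    (hF : Continuous F) (hG : Continuous G) : IsClosed {y | F y ≤ G y} := by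
  simp only [ContinuousMap.le_def, Set.ofPred_forall]
  exact isClosed_iInter fun x =>
    isClosed_le ((continuous_eval_const x).comp hF) ((continuous_eval_const x).comp hG)

variable [CompactSpace X]

theorem exists_pos_forall_le {f : C(X, ℝ)} (hf : ∀ x, 0 < f x) : ∃ δ > 0, ∀ x, δ ≤ f x := by
  cases isEmpty_or_nonempty X
  · exact ⟨1, one_pos, isEmptyElim⟩
  · obtain ⟨x, -, hx⟩ := isCompact_univ.exists_isMinOn Set.univ_nonempty f.continuous.continuousOn
    exact ⟨f x, hf x, fun y => hx (Set.mem_univ y)⟩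

theorem apply_le_norm (f : C(X, ℝ)) (x : X) : f x ≤ ‖f‖ :=
  (le_abs_self _).trans (f.norm_coe_le_norm x)

theorem neg_norm_le_apply (f : C(X, ℝ)) (x : X) : -‖f‖ ≤ f x :=
  neg_le_of_abs_le (f.norm_coe_le_norm x)

theorem norm_le_norm_of_nonneg_of_le {f g : C(X, ℝ)} (hf : 0 ≤ f) (hfg : f ≤ g) : ‖f‖ ≤ ‖g‖ :=
  (ContinuousMap.norm_le f (norm_nonneg g)).2 fun x => by
    have hfx : 0 ≤ f x := hf x
    rw [Real.norm_of_nonneg hfx]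
    exact (hfg x).trans (apply_le_norm g x)

theorem integrable_continuousMap [MeasurableSpace X] [OpensMeasurableSpace X] (μ : Measure X)
    [IsFiniteMeasure μ] (f : C(X, ℝ)) : Integrable (fun x => f x) μ :=
  BoundedContinuousFunction.integrable μ (mkOfCompact f)

theorem exists_isProbabilityMeasure_integral_eq [T2Space X] [MeasurableSpace X] [BorelSpace X]
    (Λ : C(X, ℝ) →ₗ[ℝ] ℝ) (hΛ : ∀ f, 0 ≤ f → 0 ≤ Λ f) (hone : Λ 1 = 1) :
    ∃ σ : Measure X, IsProbabilityMeasure σ ∧ ∀ f : C(X, ℝ), ∫ x, f x ∂σ = Λ f := by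
  let Λc : CompactlySupportedContinuousMap X ℝ →ₚ[ℝ] ℝ :=
    PositiveLinearMap.mk₀
      { toFun := fun f => Λ f.toContinuousMap
        map_add' := fun f g => Λ.map_add _ _
        map_smul' := fun c f => Λ.map_smul _ _ }
      fun f hf => hΛ _ hf
  have hint (f : C(X, ℝ)) : ∫ x, f x ∂(RealRMK.rieszMeasure Λc) = Λ f :=
    RealRMK.integral_rieszMeasure Λc (CompactlySupportedContinuousMap.continuousMapEquiv f)
  refine ⟨RealRMK.rieszMeasure Λc, ⟨?_⟩, hint⟩
  simpa [hone, Measure.real, ENNReal.toReal_eq_one_iff] using hint 1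

end ContinuousMaps

section Lipschitz

variable {X : Type*} [MetricSpace X]

theorem isCompact_setOf_lipschitzWith_abs_le (L : ℝ≥0) (B : ℝ) :
    IsCompact {f : C(X, ℝ) | LipschitzWith L f ∧ ∀ x, |f x| ≤ B} := by
  refine ArzelaAscoli.isCompact_of_equicontinuous _ ?_
    (LipschitzWith.uniformEquicontinuous _ L fun f => f.2.1).equicontinuous
  have himage : ContinuousMap.toFun '' {f : C(X, ℝ) | LipschitzWith L f ∧ ∀ x, |f x| ≤ B} =
      Set.univ.pi (fun _ => Set.Icc (-B) B) ∩ {g : X → ℝ | LipschitzWith L g} := by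
    ext g
    constructor
    · rintro ⟨f, ⟨hL, hB⟩, rfl⟩
      exact ⟨fun x _ => abs_le.1 (hB x), hL⟩
    · rintro ⟨hB, hL⟩
      exact ⟨⟨g, hL.continuous⟩, ⟨hL, fun x => abs_le.2 (hB x trivial)⟩, rfl⟩
  rw [himage]
  exact (isCompact_univ_pi fun _ => isCompact_Icc).inter_right (isClosed_setOfPred_lipschitzWith L)

theorem convex_setOf_lipschitzWith_abs_le (L : ℝ≥0) (B : ℝ) :
    Convex ℝ {f : C(X, ℝ) | LipschitzWith L f ∧ ∀ x, |f x| ≤ B} := by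
  rintro f ⟨hfL, hfB⟩ g ⟨hgL, hgB⟩ s t hs ht hst
  constructor
  · refine LipschitzWith.of_dist_le_mul fun x y => ?_
    have hf := hfL.dist_le_mul x y
    have hg := hgL.dist_le_mul x y
    rw [Real.dist_eq] at hf hg ⊢
    calc |s * f x + t * g x - (s * f y + t * g y)| = |s * (f x - f y) + t * (g x - g y)| := by
          ring_nf
      _ ≤ s * |f x - f y| + t * |g x - g y| := by
          simpa only [abs_mul, abs_of_nonneg hs, abs_of_nonneg ht] using
            abs_add_le (s * (f x - f y)) (t * (g x - g y))
      _ ≤ s * (L * dist x y) + t * (L * dist x y) := by gcongr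
      _ = L * dist x y := by rw [← add_mul, hst, one_mul]
  · intro x
    exact abs_le.2 (convex_Icc (-B) B (abs_le.1 (hfB x)) (abs_le.1 (hgB x)) hs ht hst)

theorem ext_of_forall_lipschitzWith_integral_eq [MeasurableSpace X] [BorelSpace X]
    {μ ν : Measure X} [IsProbabilityMeasure μ] [IsProbabilityMeasure ν]
    (h : ∀ (f : C(X, ℝ)) (L : ℝ≥0), LipschitzWith L f → ∫ x, f x ∂μ = ∫ x, f x ∂ν) : μ = ν := by
  let μ' : ProbabilityMeasure X := ⟨μ, inferInstance⟩
  let ν' : ProbabilityMeasure X := ⟨ν, inferInstance⟩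
  have hlim : Tendsto (fun _ : ℕ => μ') atTop (𝓝 ν') := by
    refine tendsto_iff_forall_lipschitz_integral_tendsto.2 ?_
    rintro f - ⟨L, hf⟩
    have hμν : ∫ x, f x ∂μ = ∫ x, f x ∂ν := h ⟨f, hf.continuous⟩ L hf
    exact tendsto_const_nhds_iff.2 hμν
  have hμν : μ' = ν' := tendsto_const_nhds_iff.1 hlim
  exact congrArg Subtype.val hμν

end Lipschitz

section PositiveOperators

variable {X : Type*} [TopologicalSpace X] {T : C(X, ℝ) →L[ℝ] C(X, ℝ)}

theorem monotone_pow_of_monotone (hT : Monotone T) (k : ℕ) : Monotone ⇑(T ^ k) := by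
  rw [FunLike.coe_pow_eq_iterate]
  exact hT.iterate k

theorem pow_apply_eq_pow_smul {s : ℝ} {h : C(X, ℝ)} (hTh : T h = s • h) (m : ℕ) :
    (T ^ m) h = s ^ m • h := by
  induction m with
  | zero => simp
  | succ m ih => rw [pow_succ', mul_apply_eq_comp, ih, map_smul, hTh, smul_smul, pow_succ]

theorem smul_pow_apply (c : ℝ) (T : C(X, ℝ) →L[ℝ] C(X, ℝ)) (k : ℕ) (f : C(X, ℝ)) :
    ((c • T) ^ k) f = c ^ k • (T ^ k) f := by
  induction k with
  | zero => simp
  | succ k ih =>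
    rw [pow_succ', mul_apply_eq_comp, ih, map_smul, _root_.smul_apply, smul_smul,
      ← pow_succ, pow_succ' T, mul_apply_eq_comp]

/-- A bounded operator on `C(X, ℝ)` is irreducible if every nonzero nonnegative function becomes
strictly positive after finitely many applications. -/
def IsIrreducibleOperator (T : C(X, ℝ) →L[ℝ] C(X, ℝ)) : Prop :=
  ∀ f : C(X, ℝ), 0 ≤ f → f ≠ 0 → ∃ m, ∀ x, 0 < (T ^ m) f x

/-- Markov operators on `C(X, ℝ)`: positive operators preserving constants. -/
structure IsMarkovOperator (M : C(X, ℝ) →L[ℝ] C(X, ℝ)) : Prop where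
  monotone : Monotone M
  map_one : M 1 = 1

/-- `σ` is invariant under the dual action on measures of the operator `M`. -/
def IsInvariantMeasure [MeasurableSpace X] (M : C(X, ℝ) →L[ℝ] C(X, ℝ)) (σ : Measure X) : Prop :=
  ∀ f : C(X, ℝ), ∫ x, M f x ∂σ = ∫ x, f x ∂σ

namespace IsMarkovOperator

variable {M : C(X, ℝ) →L[ℝ] C(X, ℝ)}

theorem apply_le (hM : IsMarkovOperator M) {f : C(X, ℝ)} {c : ℝ} (hf : ∀ x, f x ≤ c) (x : X) :
    M f x ≤ c := by
  have h : M f ≤ M (c • 1) := hM.monotone fun y => by simpa using hf y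
  simpa [hM.map_one] using h x

theorem le_apply (hM : IsMarkovOperator M) {f : C(X, ℝ)} {c : ℝ} (hf : ∀ x, c ≤ f x) (x : X) :
    c ≤ M f x := by
  have h : M (c • 1) ≤ M f := hM.monotone fun y => by simpa using hf y
  simpa [hM.map_one] using h x

/-- **Jensen's inequality**, from the tangent line of `exp` at `M f x`. -/
theorem exp_apply_le (hM : IsMarkovOperator M) (f : C(X, ℝ)) (x : X) :
    Real.exp (M f x) ≤ M (expMap f) x := by
  set s := M f x with hs
  have htangent : Real.exp s • ((1 - s) • (1 : C(X, ℝ)) + f) ≤ expMap f := fun y => by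
    have h := Real.add_one_le_exp (f y - s)
    calc Real.exp s * ((1 - s) * 1 + f y) ≤ Real.exp s * Real.exp (f y - s) := by
          gcongr; linarith
      _ = Real.exp (f y) := by rw [← Real.exp_add]; ring_nf
  have h := hM.monotone htangent x
  simp only [map_smul, map_add, hM.map_one] at h
  calc Real.exp s = Real.exp s * ((1 - s) * 1 + M f x) := by rw [← hs]; ring
    _ ≤ M (expMap f) x := h

variable [CompactSpace X]

theorem apply_pos (hM : IsMarkovOperator M) {f : C(X, ℝ)} (hf : ∀ x, 0 < f x) (x : X) :
    0 < M f x := by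
  obtain ⟨δ, hδ, hδf⟩ := exists_pos_forall_le hf
  exact hδ.trans_le (hM.le_apply hδf x)

theorem abs_pow_apply_le (hM : IsMarkovOperator M) (f : C(X, ℝ)) (k : ℕ) (x : X) :
    |(M ^ k) f x| ≤ ‖f‖ := by
  have hMk : IsMarkovOperator (M ^ k) := by
    refine ⟨monotone_pow_of_monotone hM.monotone k, ?_⟩
    rw [FunLike.coe_pow_eq_iterate]
    exact Function.iterate_fixed hM.map_one k
  exact abs_le.2 ⟨hMk.le_apply (neg_norm_le_apply f) x, hMk.apply_le (apply_le_norm f) x⟩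

theorem exists_eq_smul_one_of_fixed [Nonempty X] (hirr : IsIrreducibleOperator M)
    (hM : IsMarkovOperator M) {f : C(X, ℝ)} (hf : M f = f) : ∃ c : ℝ, f = c • 1 := by
  obtain ⟨x₀, -, hx₀⟩ := isCompact_univ.exists_isMinOn Set.univ_nonempty f.continuous.continuousOn
  refine ⟨f x₀, by_contra fun hne => ?_⟩
  have hfixed (m : ℕ) : (M ^ m) (f - f x₀ • 1) = f - f x₀ • 1 := by
    rw [FunLike.coe_pow_eq_iterate]
    exact Function.iterate_fixed (by rw [map_sub, map_smul, hM.map_one, hf]) m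
  obtain ⟨m, hm⟩ := hirr (f - f x₀ • 1) (fun y => by simpa using hx₀ (Set.mem_univ y))
    (sub_ne_zero.2 hne)
  simpa [hfixed] using hm x₀

theorem disjoint_setOf_pos_range_sub_id [Nonempty X] (hM : IsMarkovOperator M) :
    Disjoint {f : C(X, ℝ) | ∀ x, 0 < f x} (Set.range fun f => M f - f) := by
  rw [Set.disjoint_right]
  rintro _ ⟨f, rfl⟩ hpos
  obtain ⟨x, -, hx⟩ := isCompact_univ.exists_isMaxOn Set.univ_nonempty f.continuous.continuousOn
  have h1 : M f x ≤ f x := hM.apply_le (fun y => hx (Set.mem_univ y)) x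
  have h2 : 0 < M f x - f x := hpos x
  linarith

/-- Hahn–Banach: by the maximum principle the open cone of positive functions misses the range
of `M - 1`. -/
theorem exists_invariant_functional [Nonempty X] (hM : IsMarkovOperator M) :
    ∃ Λ : C(X, ℝ) →L[ℝ] ℝ, (∀ f : C(X, ℝ), (∀ x, 0 < f x) → 0 < Λ f) ∧ ∀ f, Λ (M f) = Λ f := by
  have hopen : IsOpen {f : C(X, ℝ) | ∀ x, 0 < f x} := by
    simpa only [Set.range_subset_iff, Set.mem_Ioi] using
      ContinuousMap.isOpen_setOfPred_range_subset (X := X) (isOpen_Ioi (a := (0 : ℝ)))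
  have hconvex : Convex ℝ {f : C(X, ℝ) | ∀ x, 0 < f x} := fun f hf g hg s t hs ht hst x =>
    convex_Ioi (0 : ℝ) (hf x) (hg x) hs ht hst
  obtain ⟨Φ, u, hlt, hle⟩ := geometric_hahn_banach_open hconvex hopen
    (M - 1).range.convex hM.disjoint_setOf_pos_range_sub_id
  have hrange (f : C(X, ℝ)) (c : ℝ) : u ≤ c * Φ (M f - f) := by
    have h := hle ((M - 1) (c • f)) ⟨c • f, rfl⟩
    rwa [map_smul, map_smul] at h
  have hvanish (f : C(X, ℝ)) : Φ (M f - f) = 0 := by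
    by_contra hne
    have h := hrange f ((u - 1) / Φ (M f - f))
    rw [div_mul_cancel₀ _ hne] at h
    linarith
  have hu : u ≤ 0 := by simpa using hrange 0 0
  refine ⟨-Φ, fun f hf => neg_pos.2 ((hlt f hf).trans_le hu), fun f => ?_⟩
  simpa [sub_eq_zero] using hvanish f

variable [MeasurableSpace X] [BorelSpace X]

theorem exists_isInvariantMeasure [T2Space X] [Nonempty X] (hM : IsMarkovOperator M) :
    ∃ σ : Measure X, IsProbabilityMeasure σ ∧ IsInvariantMeasure M σ := by
  obtain ⟨Λ, hpos, hinv⟩ := hM.exists_invariant_functional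
  have hone : 0 < Λ 1 := hpos 1 fun _ => one_pos
  have hnonneg (f : C(X, ℝ)) (hf : 0 ≤ f) : 0 ≤ Λ f := by
    refine le_of_forall_pos_le_add fun ε hε => ?_
    have h := hpos (f + (ε / Λ 1) • 1) fun x => by
      have hfx : 0 ≤ f x := hf x
      change 0 < f x + ε / Λ 1 * 1
      positivity
    rw [map_add, map_smul, smul_eq_mul, div_mul_cancel₀ _ hone.ne'] at h
    exact h.le
  obtain ⟨σ, hσ, hint⟩ := exists_isProbabilityMeasure_integral_eq ((Λ 1)⁻¹ • Λ).toLinearMap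
    (fun f hf => mul_nonneg (inv_nonneg.2 hone.le) (hnonneg f hf)) (inv_mul_cancel₀ hone.ne')
  refine ⟨σ, hσ, fun f => ?_⟩
  rw [hint, hint]
  exact congrArg ((Λ 1)⁻¹ * ·) (hinv f)

end IsMarkovOperator

theorem IsInvariantMeasure.integral_iterate [MeasurableSpace X] {M : C(X, ℝ) →L[ℝ] C(X, ℝ)}
    {σ : Measure X} (hσ : IsInvariantMeasure M σ) (f : C(X, ℝ)) (k : ℕ) :
    ∫ x, M^[k] f x ∂σ = ∫ x, f x ∂σ := by
  induction k with
  | zero => rfl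
  | succ k ih => rw [Function.iterate_succ_apply', hσ, ih]

section Uniqueness

variable [CompactSpace X]

theorem exists_subseq_birkhoffAverage_tendsto [Nonempty X] {M : C(X, ℝ) →L[ℝ] C(X, ℝ)}
    (hM : IsMarkovOperator M) (hirr : IsIrreducibleOperator M) {K : Set C(X, ℝ)}
    (hK : IsCompact K) (hconv : Convex ℝ K) {f : C(X, ℝ)} (hf : ∀ k, (M ^ k) f ∈ K) :
    ∃ (c : ℝ) (n : ℕ → ℕ), StrictMono n ∧
      Tendsto (fun i => birkhoffAverage ℝ M id (n i + 1) f) atTop (𝓝 (c • 1)) := by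
  simp only [FunLike.coe_pow_eq_iterate] at hf
  have hmem (n : ℕ) : birkhoffAverage ℝ M id (n + 1) f ∈ K := by
    rw [birkhoffAverage, birkhoffSum, Finset.smul_sum]
    refine hconv.sum_mem (fun _ _ => by positivity) ?_ fun k _ => hf k
    rw [Finset.sum_const, Finset.card_range, nsmul_eq_mul]
    exact mul_inv_cancel₀ (by positivity)
  obtain ⟨g, -, n, hn, hlim⟩ := hK.tendsto_subseq hmem
  have hbdd : Bornology.IsBounded (Set.range fun k => id (M^[k] f)) :=
    hK.isBounded.subset (Set.range_subset_iff.2 hf)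
  have hcomm (m : ℕ) : birkhoffAverage ℝ M id m (M f) = M (birkhoffAverage ℝ M id m f) := by
    simp only [birkhoffAverage, birkhoffSum, id, map_smul, map_sum, ← Function.iterate_succ_apply,
      ← Function.iterate_succ_apply']
  have hfixed : M g = g := by
    have hdiff := (tendsto_birkhoffAverage_apply_sub_birkhoffAverage ℝ hbdd).comp
      ((tendsto_add_atTop_nat 1).comp hn.tendsto_atTop)
    have hMlim := ((M.continuous.tendsto g).comp hlim).sub hlim
    refine sub_eq_zero.1 (tendsto_nhds_unique hMlim (hdiff.congr fun i => ?_))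
    simp only [Function.comp_apply, hcomm]
  obtain ⟨c, rfl⟩ := hM.exists_eq_smul_one_of_fixed hirr hfixed
  exact ⟨c, n, hn, hlim⟩

variable [MeasurableSpace X] [OpensMeasurableSpace X]

theorem continuous_integral_continuousMap (σ : Measure X) [IsFiniteMeasure σ] :
    Continuous fun f : C(X, ℝ) => ∫ x, f x ∂σ := by
  refine (LipschitzWith.of_dist_le_mul (K := (σ.real Set.univ).toNNReal) fun f g => ?_).continuous
  rw [dist_eq_norm, dist_eq_norm, ← integral_sub (integrable_continuousMap σ f)
    (integrable_continuousMap σ g), Real.coe_toNNReal _ measureReal_nonneg, mul_comm]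
  exact norm_integral_le_of_norm_le_const (.of_forall (f - g).norm_coe_le_norm)

theorem IsInvariantMeasure.integral_birkhoffAverage {M : C(X, ℝ) →L[ℝ] C(X, ℝ)} {σ : Measure X}
    [IsFiniteMeasure σ] (hσ : IsInvariantMeasure M σ) (f : C(X, ℝ)) (n : ℕ) :
    ∫ x, birkhoffAverage ℝ M id (n + 1) f x ∂σ = ∫ x, f x ∂σ := by
  simp only [birkhoffAverage, birkhoffSum, id, ContinuousMap.smul_apply, ContinuousMap.sum_apply,
    integral_smul]
  rw [integral_finsetSum _ fun k _ => integrable_continuousMap σ (M^[k] f)]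
  simp only [hσ.integral_iterate, Finset.sum_const, Finset.card_range, nsmul_eq_mul, smul_eq_mul]
  exact inv_mul_cancel_left₀ (by positivity) _

end Uniqueness

theorem IsMarkovOperator.eq_of_isInvariantMeasure {X : Type*} [MetricSpace X] [CompactSpace X]
    [MeasurableSpace X] [BorelSpace X] {M : C(X, ℝ) →L[ℝ] C(X, ℝ)}
    (hM : IsMarkovOperator M) (hirr : IsIrreducibleOperator M)
    (horbit : ∀ (f : C(X, ℝ)) (L : ℝ≥0), LipschitzWith L f →
      ∃ K, IsCompact K ∧ Convex ℝ K ∧ ∀ k, (M ^ k) f ∈ K)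
    {σ τ : Measure X} [IsProbabilityMeasure σ] [IsProbabilityMeasure τ]
    (hσ : IsInvariantMeasure M σ) (hτ : IsInvariantMeasure M τ) : σ = τ := by
  have : Nonempty X := nonempty_of_isProbabilityMeasure σ
  refine ext_of_forall_lipschitzWith_integral_eq fun f L hf => ?_
  obtain ⟨K, hK, hconv, hmem⟩ := horbit f L hf
  obtain ⟨c, n, -, hlim⟩ := exists_subseq_birkhoffAverage_tendsto hM hirr hK hconv hmem
  have hconst (ρ : Measure X) [IsProbabilityMeasure ρ] (hρ : IsInvariantMeasure M ρ) :
      ∫ x, f x ∂ρ = c := by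
    have h := ((continuous_integral_continuousMap ρ).tendsto _).comp hlim
    refine tendsto_nhds_unique (tendsto_const_nhds.congr fun i => ?_) h |>.trans (by simp)
    exact (hρ.integral_birkhoffAverage f (n i)).symm
  rw [hconst σ hσ, hconst τ hτ]

end PositiveOperators

section DoeblinFortet

variable {X : Type*} [MetricSpace X] [CompactSpace X] {T : C(X, ℝ) →L[ℝ] C(X, ℝ)}

/-- Positive irreducible operators on `C(X, ℝ)` which contract Lipschitz constants, by a factor
`q` smaller than the lower bound `a` of `T 1`, up to a multiple of the uniform norm (the
Doeblin–Fortet or Lasota–Yorke inequality). -/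
structure IsDoeblinFortet (T : C(X, ℝ) →L[ℝ] C(X, ℝ)) (a q C : ℝ≥0) : Prop where
  monotone : Monotone T
  irreducible : IsIrreducibleOperator T
  le_apply_one (x : X) : a ≤ T 1 x
  lt : q < a
  lipschitzWith_apply {f : C(X, ℝ)} {L : ℝ≥0} :
    LipschitzWith L f → LipschitzWith (q * L + C * ‖f‖₊) (T f)

/-- Nonzero nonnegative Lipschitz functions with `s • g ≤ T g`. The Lipschitz constant is
normalised by the norm, which makes the condition invariant under scaling. -/
structure IsSubeigenfunction (T : C(X, ℝ) →L[ℝ] C(X, ℝ)) (L : ℝ≥0) (s : ℝ) (g : C(X, ℝ)) :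
    Prop where
  nonneg : 0 ≤ g
  ne_zero : g ≠ 0
  lipschitzWith : LipschitzWith (L * ‖g‖₊) g
  smul_le : s • g ≤ T g

namespace IsSubeigenfunction

variable {L : ℝ≥0} {s : ℝ} {g : C(X, ℝ)}

theorem mul_norm_le (hg : IsSubeigenfunction T L s g) (hs : 0 ≤ s) : s * ‖g‖ ≤ ‖T g‖ := by
  have h := norm_le_norm_of_nonneg_of_le (smul_nonneg hs hg.nonneg) hg.smul_le
  rwa [norm_smul, Real.norm_of_nonneg hs] at h

theorem le_opNorm (hg : IsSubeigenfunction T L s g) (hs : 0 ≤ s) : s ≤ ‖T‖ :=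
  le_of_mul_le_mul_right ((hg.mul_norm_le hs).trans (T.le_opNorm g)) (norm_pos_iff.2 hg.ne_zero)

theorem smul (hg : IsSubeigenfunction T L s g) {c : ℝ} (hc : 0 < c) :
    IsSubeigenfunction T L s (c • g) where
  nonneg := smul_nonneg hc.le hg.nonneg
  ne_zero := smul_ne_zero hc.ne' hg.ne_zero
  lipschitzWith := by
    have h := (lipschitzWith_smul c).comp hg.lipschitzWith
    rwa [nnnorm_smul, mul_left_comm]
  smul_le := by
    rw [map_smul, smul_comm]
    exact smul_le_smul_of_nonneg_left hg.smul_le hc.le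

variable {a q C : ℝ≥0}

theorem apply (hg : IsSubeigenfunction T L s g) (hT : IsDoeblinFortet T a q C)
    (hL : q * L + C ≤ a * L) (has : a ≤ s) : IsSubeigenfunction T L s (T g) where
  nonneg := by simpa using hT.monotone hg.nonneg
  ne_zero := by
    have hs : 0 < s := (NNReal.coe_pos.2 (pos_of_gt hT.lt)).trans_le has
    have hnorm := (mul_pos hs (norm_pos_iff.2 hg.ne_zero)).trans_le (hg.mul_norm_le hs.le)
    exact norm_pos_iff.1 hnorm
  lipschitzWith := by
    refine (hT.lipschitzWith_apply hg.lipschitzWith).weaken ?_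
    have hnorm : a * ‖g‖₊ ≤ ‖T g‖₊ := by
      refine NNReal.coe_le_coe.1 (le_trans ?_ (hg.mul_norm_le (a.2.trans has)))
      exact mul_le_mul_of_nonneg_right has (norm_nonneg g)
    calc q * (L * ‖g‖₊) + C * ‖g‖₊ = (q * L + C) * ‖g‖₊ := by ring
      _ ≤ a * L * ‖g‖₊ := by gcongr
      _ = L * (a * ‖g‖₊) := by ring
      _ ≤ L * ‖T g‖₊ := by gcongr
  smul_le := by
    rw [← map_smul]
    exact hT.monotone hg.smul_le

theorem pow_apply (hg : IsSubeigenfunction T L s g) (hT : IsDoeblinFortet T a q C)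
    (hL : q * L + C ≤ a * L) (has : a ≤ s) (m : ℕ) : IsSubeigenfunction T L s ((T ^ m) g) := by
  rw [FunLike.coe_pow_eq_iterate]
  induction m with
  | zero => exact hg
  | succ m ih => rw [Function.iterate_succ_apply']; exact ih.apply hT hL has

end IsSubeigenfunction

theorem isCompact_setOf_isSubeigenfunction (T : C(X, ℝ) →L[ℝ] C(X, ℝ)) (L a : ℝ≥0) :
    IsCompact {p : ℝ × C(X, ℝ) | a ≤ p.1 ∧ ‖p.2‖ = 1 ∧ IsSubeigenfunction T L p.1 p.2} := by
  have hset : {p : ℝ × C(X, ℝ) | a ≤ p.1 ∧ ‖p.2‖ = 1 ∧ IsSubeigenfunction T L p.1 p.2} =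
      (Set.Icc (a : ℝ) ‖T‖ ×ˢ {f : C(X, ℝ) | LipschitzWith L f ∧ ∀ x, |f x| ≤ 1}) ∩
        ({p | ‖p.2‖ = 1} ∩ ({p | 0 ≤ p.2} ∩ {p | p.1 • p.2 ≤ T p.2})) := by
    ext ⟨s, g⟩
    constructor
    · rintro ⟨has, hnorm, hg⟩
      have hnnnorm : ‖g‖₊ = 1 := NNReal.eq hnorm
      refine ⟨⟨⟨has, hg.le_opNorm (a.2.trans has)⟩, ?_, fun x => ?_⟩, hnorm, hg.nonneg, hg.smul_le⟩
      · simpa [hnnnorm] using hg.lipschitzWith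
      · exact hnorm ▸ g.norm_coe_le_norm x
    · rintro ⟨⟨⟨has, -⟩, hlip, -⟩, hnorm, hnonneg, hle⟩
      have hnnnorm : ‖g‖₊ = 1 := NNReal.eq hnorm
      refine ⟨has, hnorm, hnonneg, ?_, by simpa [hnnnorm] using hlip, hle⟩
      rintro rfl
      simp at hnorm
  rw [hset]
  refine (isCompact_Icc.prod (isCompact_setOf_lipschitzWith_abs_le L 1)).inter_right ?_
  exact (isClosed_eq continuous_snd.norm continuous_const).inter
    ((isClosed_setOf_continuousMap_le continuous_const continuous_snd).inter
      (isClosed_setOf_continuousMap_le (by fun_prop) (by fun_prop)))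

namespace IsDoeblinFortet

variable {a q C : ℝ≥0}

theorem isSubeigenfunction_one [Nonempty X] (hT : IsDoeblinFortet T a q C) (L : ℝ≥0) :
    IsSubeigenfunction T L a 1 where
  nonneg _ := zero_le_one
  ne_zero := one_ne_zero
  lipschitzWith := (LipschitzWith.const (1 : ℝ)).weaken zero_le
  smul_le x := by simpa using hT.le_apply_one x

theorem exists_maximal_isSubeigenfunction [Nonempty X] (hT : IsDoeblinFortet T a q C) (L : ℝ≥0) :
    ∃ (s : ℝ) (h : C(X, ℝ)), a ≤ s ∧ IsSubeigenfunction T L s h ∧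
      ∀ (t : ℝ) (g : C(X, ℝ)), a ≤ t → IsSubeigenfunction T L t g → t ≤ s := by
  obtain ⟨⟨s, h⟩, ⟨has, -, hh⟩, hmax⟩ :=
    (isCompact_setOf_isSubeigenfunction T L a).exists_isMaxOn
      ⟨(a, 1), le_rfl, norm_one, hT.isSubeigenfunction_one L⟩ continuous_fst.continuousOn
  refine ⟨s, h, has, hh, fun t g hat hg => ?_⟩
  have hpos : 0 < ‖g‖ := norm_pos_iff.2 hg.ne_zero
  refine hmax (a := (t, ‖g‖⁻¹ • g)) ⟨hat, ?_, hg.smul (inv_pos.2 hpos)⟩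
  rw [norm_smul, norm_inv, norm_norm, inv_mul_cancel₀ hpos.ne']

/-- Collatz–Wielandt: were `T h - s • h` nonzero, some iterate `T ^ m` would make it strictly
positive, and `(T ^ m) h` would be a subeigenfunction for a value larger than `s`. -/
theorem apply_eq_smul_of_maximal (hT : IsDoeblinFortet T a q C) {L : ℝ≥0}
    (hL : q * L + C ≤ a * L) {s : ℝ} {h : C(X, ℝ)} (has : a ≤ s)
    (hh : IsSubeigenfunction T L s h)
    (hmax : ∀ (t : ℝ) (g : C(X, ℝ)), a ≤ t → IsSubeigenfunction T L t g → t ≤ s) :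
    T h = s • h := by
  by_contra hne
  obtain ⟨m, hm⟩ := hT.irreducible (T h - s • h) (sub_nonneg.2 hh.smul_le) (sub_ne_zero.2 hne)
  obtain ⟨δ, hδ, hδm⟩ := exists_pos_forall_le hm
  set g := (T ^ m) h with hg
  have hgsub : IsSubeigenfunction T L s g := hh.pow_apply hT hL has m
  have hnorm : 0 < ‖g‖ := norm_pos_iff.2 hgsub.ne_zero
  have hcomm : (T ^ m) (T h - s • h) = T g - s • g := by
    rw [map_sub, map_smul, hg, ← mul_apply_eq_comp, ← mul_apply_eq_comp, pow_mul_comm']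
  have hsucc : IsSubeigenfunction T L (s + δ / ‖g‖) g := by
    refine ⟨hgsub.nonneg, hgsub.ne_zero, hgsub.lipschitzWith, fun x => ?_⟩
    have hgap : δ ≤ T g x - s * g x := by simpa [hcomm] using hδm x
    have hle : δ / ‖g‖ * g x ≤ δ := by
      rw [div_mul_eq_mul_div, div_le_iff₀ hnorm]
      exact mul_le_mul_of_nonneg_left (apply_le_norm g x) hδ.le
    change (s + δ / ‖g‖) * g x ≤ T g x
    linarith
  have hpos : 0 < δ / ‖g‖ := div_pos hδ hnorm
  linarith [hmax _ g (by linarith) hsucc]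

theorem exists_eigenfunction [Nonempty X] (hT : IsDoeblinFortet T a q C) :
    ∃ (p : ℝ) (φ : C(X, ℝ)) (L : ℝ≥0), a ≤ Real.exp p ∧ LipschitzWith L (expMap φ) ∧
      T (expMap φ) = Real.exp p • expMap φ := by
  have hL : q * (C / (a - q)) + C ≤ a * (C / (a - q)) := by
    have h : (a - q) * (C / (a - q)) = C := mul_div_cancel₀ C (tsub_pos_of_lt hT.lt).ne'
    calc q * (C / (a - q)) + C = (q + (a - q)) * (C / (a - q)) := by rw [add_mul, h]
      _ ≤ a * (C / (a - q)) := by rw [add_tsub_cancel_of_le hT.lt.le]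
  obtain ⟨s, h, has, hh, hmax⟩ := hT.exists_maximal_isSubeigenfunction (C / (a - q))
  have heig : T h = s • h := hT.apply_eq_smul_of_maximal hL has hh hmax
  have hs : 0 < s := (NNReal.coe_pos.2 (pos_of_gt hT.lt)).trans_le has
  obtain ⟨m, hm⟩ := hT.irreducible h hh.nonneg hh.ne_zero
  have hpow : (T ^ m) h = s ^ m • h := pow_apply_eq_pow_smul heig m
  have hpos (x : X) : 0 < h x := by
    have h := hm x
    rw [hpow] at h
    exact pos_of_mul_pos_right h (pow_nonneg hs.le m)
  obtain ⟨φ, rfl⟩ := exists_expMap_eq hpos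
  refine ⟨Real.log s, φ, _, ?_, hh.lipschitzWith, ?_⟩ <;> rwa [Real.exp_log hs]

end IsDoeblinFortet

end DoeblinFortet

section DoobTransform

variable {X : Type*}

section Compact

variable [TopologicalSpace X] [CompactSpace X] {T : C(X, ℝ) →L[ℝ] C(X, ℝ)} {p : ℝ} {φ : C(X, ℝ)}

/-- The Doob transform `f ↦ e^{-p} h⁻¹ T (h f)` of the operator `T` by the positive function
`h = expMap φ`; it is a Markov operator when `h` is an eigenfunction of `T` for `e^p`. -/
def doobTransform (T : C(X, ℝ) →L[ℝ] C(X, ℝ)) (p : ℝ) (φ : C(X, ℝ)) :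
    C(X, ℝ) →L[ℝ] C(X, ℝ) :=
  ContinuousLinearMap.mul ℝ C(X, ℝ) (expMap (-φ)) ∘L (Real.exp (-p) • T) ∘L
    ContinuousLinearMap.mul ℝ C(X, ℝ) (expMap φ)

theorem doobTransform_apply (f : C(X, ℝ)) :
    doobTransform T p φ f = expMap (-φ) * Real.exp (-p) • T (expMap φ * f) := rfl

theorem apply_expMap_mul_eq (f : C(X, ℝ)) :
    T (expMap φ * f) = Real.exp p • (expMap φ * doobTransform T p φ f) := by
  rw [doobTransform_apply, ← mul_assoc, expMap_mul_expMap_neg, one_mul,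
    smul_smul, ← Real.exp_add, add_neg_cancel, Real.exp_zero, one_smul]

theorem doobTransform_pow_apply (k : ℕ) (f : C(X, ℝ)) :
    (doobTransform T p φ ^ k) f = expMap (-φ) * ((Real.exp (-p) • T) ^ k) (expMap φ * f) := by
  induction k with
  | zero => simp [← mul_assoc, expMap_neg_mul_expMap]
  | succ k ih =>
    rw [pow_succ', mul_apply_eq_comp, ih, doobTransform_apply, ← mul_assoc (expMap φ),
      expMap_mul_expMap_neg, one_mul, pow_succ', mul_apply_eq_comp]
    rfl

theorem isMarkovOperator_doobTransform (hT : Monotone T)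
    (heig : T (expMap φ) = Real.exp p • expMap φ) : IsMarkovOperator (doobTransform T p φ) where
  monotone f g hfg x := by
    have hmul : expMap φ * f ≤ expMap φ * g := fun y =>
      mul_le_mul_of_nonneg_left (hfg y) (Real.exp_pos _).le
    exact mul_le_mul_of_nonneg_left (mul_le_mul_of_nonneg_left (hT hmul x) (Real.exp_pos _).le)
      (Real.exp_pos _).le
  map_one := by
    rw [doobTransform_apply, mul_one, heig, smul_smul, ← Real.exp_add, neg_add_cancel,
      Real.exp_zero, one_smul, expMap_neg_mul_expMap]

theorem isIrreducibleOperator_doobTransform (hT : IsIrreducibleOperator T) :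
    IsIrreducibleOperator (doobTransform T p φ) := by
  intro f hf hne
  have hmul : 0 ≤ expMap φ * f := fun x => mul_nonneg (Real.exp_pos _).le (hf x)
  have hmul_ne : expMap φ * f ≠ 0 := fun h => hne <| by
    rw [← one_mul f, ← expMap_neg_mul_expMap φ, mul_assoc, h, mul_zero]
  obtain ⟨m, hm⟩ := hT _ hmul hmul_ne
  refine ⟨m, fun x => ?_⟩
  rw [doobTransform_pow_apply, smul_pow_apply]
  exact mul_pos (Real.exp_pos _) (mul_pos (pow_pos (Real.exp_pos _) m) (hm x))

end Compact

variable [MetricSpace X] [CompactSpace X] {T : C(X, ℝ) →L[ℝ] C(X, ℝ)} {p : ℝ} {φ : C(X, ℝ)}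
  {a q C : ℝ≥0}

theorem lipschitzWith_mul_of_lipschitzWith {f g : C(X, ℝ)} {L L' : ℝ≥0} (hf : LipschitzWith L f)
    (hg : LipschitzWith L' g) : LipschitzWith (‖f‖₊ * L' + ‖g‖₊ * L) (f * g : C(X, ℝ)) := by
  refine LipschitzWith.of_dist_le_mul fun x y => ?_
  have hfxy := hf.dist_le_mul x y
  have hgxy := hg.dist_le_mul x y
  rw [Real.dist_eq] at hfxy hgxy ⊢
  calc |f x * g x - f y * g y| = |f x * (g x - g y) + g y * (f x - f y)| := by ring_nf
    _ ≤ |f x| * |g x - g y| + |g y| * |f x - f y| := by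
        simpa only [abs_mul] using abs_add_le (f x * (g x - g y)) (g y * (f x - f y))
    _ ≤ ‖f‖ * (L' * dist x y) + ‖g‖ * (L * dist x y) := by
        gcongr
        exacts [f.norm_coe_le_norm x, g.norm_coe_le_norm y]
    _ = (‖f‖₊ * L' + ‖g‖₊ * L : ℝ≥0) * dist x y := by push_cast; ring

namespace IsDoeblinFortet

theorem exists_forall_lipschitzWith_pow_apply (hT : IsDoeblinFortet T a q C)
    (hp : a ≤ Real.exp p) {g : C(X, ℝ)} {L B : ℝ≥0} (hg : LipschitzWith L g)
    (hB : ∀ k, ‖((Real.exp (-p) • T) ^ k) g‖₊ ≤ B) :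
    ∃ L', ∀ k, LipschitzWith L' (((Real.exp (-p) • T) ^ k) g) := by
  have ha : 0 < a := pos_of_gt hT.lt
  have hexp : ‖Real.exp (-p)‖₊ ≤ a⁻¹ := by
    rw [← NNReal.coe_le_coe, coe_nnnorm, Real.norm_of_nonneg (Real.exp_pos _).le, Real.exp_neg]
    exact inv_anti₀ (NNReal.coe_pos.2 ha) hp
  set L' := max L (C * B / (a - q))
  have hinvariant : q * L' + C * B ≤ a * L' := by
    have h : C * B ≤ (a - q) * L' :=
      (div_le_iff₀' (tsub_pos_of_lt hT.lt)).1 (le_max_right _ _)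
    calc q * L' + C * B ≤ q * L' + (a - q) * L' := by gcongr
      _ = a * L' := by rw [← add_mul, add_tsub_cancel_of_le hT.lt.le]
  refine ⟨L', fun k => ?_⟩
  induction k with
  | zero => exact hg.weaken (le_max_left _ _)
  | succ k ih =>
    have hstep := (lipschitzWith_smul (Real.exp (-p))).comp (hT.lipschitzWith_apply ih)
    rw [pow_succ', mul_apply_eq_comp]
    refine hstep.weaken ?_
    calc ‖Real.exp (-p)‖₊ * (q * L' + C * ‖((Real.exp (-p) • T) ^ k) g‖₊)
        ≤ a⁻¹ * (q * L' + C * B) := by gcongr; exact hB k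
      _ ≤ a⁻¹ * (a * L') := by gcongr
      _ = L' := inv_mul_cancel_left₀ ha.ne' L'

theorem exists_isCompact_convex_doobTransform_pow_mem (hT : IsDoeblinFortet T a q C)
    (hp : a ≤ Real.exp p) (heig : T (expMap φ) = Real.exp p • expMap φ) {Lφ : ℝ≥0}
    (hφ : LipschitzWith Lφ (expMap φ)) {f : C(X, ℝ)} {L : ℝ≥0} (hf : LipschitzWith L f) :
    ∃ K, IsCompact K ∧ Convex ℝ K ∧ ∀ k, (doobTransform T p φ ^ k) f ∈ K := by
  have hbound (k : ℕ) : ‖((Real.exp (-p) • T) ^ k) (expMap φ * f)‖₊ ≤ ‖expMap φ‖₊ * ‖f‖₊ := by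
    have hcancel : ((Real.exp (-p) • T) ^ k) (expMap φ * f) =
        expMap φ * (doobTransform T p φ ^ k) f := by
      rw [doobTransform_pow_apply, ← mul_assoc, expMap_mul_expMap_neg, one_mul]
    rw [hcancel]
    refine (nnnorm_mul_le _ _).trans (mul_le_mul_right ?_ _)
    exact (ContinuousMap.norm_le _ (norm_nonneg f)).2
      ((isMarkovOperator_doobTransform hT.monotone heig).abs_pow_apply_le f k)
  obtain ⟨L', hL'⟩ := hT.exists_forall_lipschitzWith_pow_apply hp
    (lipschitzWith_mul_of_lipschitzWith hφ hf) hbound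
  let mulInv := ContinuousLinearMap.mul ℝ C(X, ℝ) (expMap (-φ))
  refine ⟨mulInv '' {g | LipschitzWith L' g ∧ ∀ x, |g x| ≤ ‖expMap φ‖ * ‖f‖},
    (isCompact_setOf_lipschitzWith_abs_le _ _).image mulInv.continuous,
    (convex_setOf_lipschitzWith_abs_le _ _).linear_image mulInv.toLinearMap, fun k => ?_⟩
  rw [doobTransform_pow_apply]
  exact ⟨_, ⟨hL' k, fun x => (ContinuousMap.norm_coe_le_norm _ x).trans (hbound k)⟩, rfl⟩

theorem eq_of_isInvariantMeasure_doobTransform [MeasurableSpace X] [BorelSpace X]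
    (hT : IsDoeblinFortet T a q C) (hp : a ≤ Real.exp p)
    (heig : T (expMap φ) = Real.exp p • expMap φ) {Lφ : ℝ≥0} (hφ : LipschitzWith Lφ (expMap φ))
    {σ τ : Measure X} [IsProbabilityMeasure σ] [IsProbabilityMeasure τ]
    (hσ : IsInvariantMeasure (doobTransform T p φ) σ)
    (hτ : IsInvariantMeasure (doobTransform T p φ) τ) : σ = τ :=
  (isMarkovOperator_doobTransform hT.monotone heig).eq_of_isInvariantMeasure
    (isIrreducibleOperator_doobTransform hT.irreducible)
    (fun _ _ hf => hT.exists_isCompact_convex_doobTransform_pow_mem hp heig hφ hf) hσ hτ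

end IsDoeblinFortet

end DoobTransform

section FeynmanKac

variable {X : Type*} [TopologicalSpace X] [CompactSpace X] {P : C(X, ℝ) →L[ℝ] C(X, ℝ)}

/-- The one-step Feynman–Kac operator `f ↦ P (e^W f)` of the Markov operator `P` with
potential `W`. -/
def feynmanKac (P : C(X, ℝ) →L[ℝ] C(X, ℝ)) (W : C(X, ℝ)) : C(X, ℝ) →L[ℝ] C(X, ℝ) :=
  P ∘L ContinuousLinearMap.mul ℝ C(X, ℝ) (expMap W)

/-- `Q W` is the exponential growth rate of the Feynman–Kac semigroup with potential `W`,
from every starting point. -/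
def IsPressure (P : C(X, ℝ) →L[ℝ] C(X, ℝ)) (Q : C(X, ℝ) → ℝ) : Prop :=
  ∀ (W : C(X, ℝ)) (x : X),
    Tendsto (fun k : ℕ => (k : ℝ)⁻¹ * Real.log ((feynmanKac P W ^ k) 1 x)) atTop (𝓝 (Q W))

/-- `σ` maximises `W ↦ ⟨W, σ⟩ - Q W` at `V`; equivalently `Q V = ⟨V, σ⟩ - I σ` for the Legendre
transform `I` of `Q`. -/
def IsEquilibrium [MeasurableSpace X] (Q : C(X, ℝ) → ℝ) (V : C(X, ℝ)) (σ : Measure X) : Prop :=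
  ∀ W : C(X, ℝ), ∫ x, W x ∂σ - Q W ≤ ∫ x, V x ∂σ - Q V

theorem feynmanKac_apply (W f : C(X, ℝ)) : feynmanKac P W f = P (expMap W * f) := rfl

theorem feynmanKac_expMap_mul {p : ℝ} {φ : C(X, ℝ)} (V W f : C(X, ℝ)) :
    feynmanKac P W (expMap φ * f) =
      Real.exp p • (expMap φ * doobTransform (feynmanKac P V) p φ (expMap (W - V) * f)) := by
  rw [← apply_expMap_mul_eq, feynmanKac_apply, feynmanKac_apply]
  congr 1
  ext x
  change Real.exp (W x) * (Real.exp (φ x) * f x) =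
    Real.exp (V x) * (Real.exp (φ x) * (Real.exp (W x - V x) * f x))
  rw [Real.exp_sub]
  field_simp

theorem monotone_feynmanKac (hP : IsMarkovOperator P) (W : C(X, ℝ)) :
    Monotone (feynmanKac P W) := fun f g hfg =>
  hP.monotone (show expMap W * f ≤ expMap W * g from fun x =>
    mul_le_mul_of_nonneg_left (hfg x) (Real.exp_pos _).le)

theorem feynmanKac_apply_mem_Icc (hP : IsMarkovOperator P) (W : C(X, ℝ)) {f : C(X, ℝ)} {c d : ℝ}
    (hc : 0 ≤ c) (hf : ∀ x, f x ∈ Set.Icc c d) (x : X) :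
    feynmanKac P W f x ∈ Set.Icc (Real.exp (-‖W‖) * c) (Real.exp ‖W‖ * d) := by
  refine ⟨hP.le_apply (fun y => ?_) x, hP.apply_le (fun y => ?_) x⟩
  · have hW := Real.exp_le_exp.2 (neg_norm_le_apply W y)
    exact mul_le_mul hW (hf y).1 hc (Real.exp_pos _).le
  · have hW := Real.exp_le_exp.2 (apply_le_norm W y)
    exact mul_le_mul hW (hf y).2 (hc.trans (hf y).1) (Real.exp_pos _).le

theorem feynmanKac_pow_one_mem_Icc (hP : IsMarkovOperator P) (W : C(X, ℝ)) (k : ℕ) (x : X) :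
    (feynmanKac P W ^ k) 1 x ∈ Set.Icc (Real.exp (-(k * ‖W‖))) (Real.exp (k * ‖W‖)) := by
  induction k generalizing x with
  | zero => simp
  | succ k ih =>
    have h := feynmanKac_apply_mem_Icc hP W (Real.exp_pos _).le ih x
    rw [← Real.exp_add, ← Real.exp_add] at h
    rw [pow_succ', mul_apply_eq_comp]
    convert h using 3 <;> push_cast <;> ring

theorem feynmanKac_pow_one_pos (hP : IsMarkovOperator P) (W : C(X, ℝ)) (k : ℕ) (x : X) :
    0 < (feynmanKac P W ^ k) 1 x :=
  (Real.exp_pos _).trans_le (feynmanKac_pow_one_mem_Icc hP W k x).1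

theorem abs_inv_mul_log_feynmanKac_pow_one_le (hP : IsMarkovOperator P) (W : C(X, ℝ)) (k : ℕ)
    (x : X) : |(k : ℝ)⁻¹ * Real.log ((feynmanKac P W ^ k) 1 x)| ≤ ‖W‖ := by
  have hpos := feynmanKac_pow_one_pos hP W k x
  obtain ⟨hlower, hupper⟩ := feynmanKac_pow_one_mem_Icc hP W k x
  have hlog : |Real.log ((feynmanKac P W ^ k) 1 x)| ≤ k * ‖W‖ :=
    abs_le.2 ⟨(Real.le_log_iff_exp_le hpos).2 hlower, (Real.log_le_iff_le_exp hpos).2 hupper⟩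
  rw [abs_mul, abs_inv, Nat.abs_cast]
  exact inv_mul_le_of_le_mul₀ (Nat.cast_nonneg k) (norm_nonneg W) hlog

variable {Q : C(X, ℝ) → ℝ} {p : ℝ} {φ V : C(X, ℝ)}

theorem abs_log_feynmanKac_pow_one_sub_le (hP : IsMarkovOperator P)
    (heig : feynmanKac P V (expMap φ) = Real.exp p • expMap φ) (k : ℕ) (x : X) :
    |Real.log ((feynmanKac P V ^ k) 1 x) - k * p| ≤ 2 * ‖φ‖ := by
  have hmono := monotone_pow_of_monotone (monotone_feynmanKac hP V) k
  have hpow : (feynmanKac P V ^ k) (expMap φ) x = Real.exp (k * p + φ x) := by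
    rw [pow_apply_eq_pow_smul heig, ← Real.exp_nat_mul, Real.exp_add]
    rfl
  have hupper : Real.exp (-‖φ‖) * (feynmanKac P V ^ k) 1 x ≤ Real.exp (k * p + φ x) := by
    have hle : Real.exp (-‖φ‖) • (1 : C(X, ℝ)) ≤ expMap φ := fun y => by
      simpa using neg_norm_le_apply φ y
    have h : (feynmanKac P V ^ k) (Real.exp (-‖φ‖) • 1) x ≤ (feynmanKac P V ^ k) (expMap φ) x :=
      hmono hle x
    rwa [hpow, map_smul] at h
  have hlower : Real.exp (k * p + φ x) ≤ Real.exp ‖φ‖ * (feynmanKac P V ^ k) 1 x := by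
    have hle : expMap φ ≤ Real.exp ‖φ‖ • (1 : C(X, ℝ)) := fun y => by
      simpa using apply_le_norm φ y
    have h : (feynmanKac P V ^ k) (expMap φ) x ≤ (feynmanKac P V ^ k) (Real.exp ‖φ‖ • 1) x :=
      hmono hle x
    rwa [hpow, map_smul] at h
  rw [← Real.exp_log (feynmanKac_pow_one_pos hP V k x), ← Real.exp_add, Real.exp_le_exp]
    at hupper hlower
  have h1 := apply_le_norm φ x
  have h2 := neg_norm_le_apply φ x
  exact abs_le.2 ⟨by linarith, by linarith⟩

theorem IsPressure.eq_of_eigenfunction [Nonempty X] (hQ : IsPressure P Q)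
    (hP : IsMarkovOperator P) (heig : feynmanKac P V (expMap φ) = Real.exp p • expMap φ) :
    Q V = p := by
  obtain ⟨x⟩ := ‹Nonempty X›
  have hinv : Tendsto (fun k : ℕ => (k : ℝ)⁻¹ * (2 * ‖φ‖)) atTop (𝓝 0) := by
    simpa using tendsto_inv_atTop_nhds_zero_nat.mul_const (2 * ‖φ‖)
  have hdiff : Tendsto (fun k : ℕ => (k : ℝ)⁻¹ * Real.log ((feynmanKac P V ^ k) 1 x) - p) atTop
      (𝓝 0) := by
    refine squeeze_zero_norm' ?_ hinv
    filter_upwards [eventually_gt_atTop 0] with k hk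
    have hk' : (k : ℝ) ≠ 0 := Nat.cast_ne_zero.2 hk.ne'
    calc ‖(k : ℝ)⁻¹ * Real.log ((feynmanKac P V ^ k) 1 x) - p‖
        = (k : ℝ)⁻¹ * |Real.log ((feynmanKac P V ^ k) 1 x) - k * p| := by
          rw [Real.norm_eq_abs, ← inv_mul_cancel_left₀ hk' p, ← mul_sub, abs_mul, abs_inv,
            Nat.abs_cast, inv_mul_cancel_left₀ hk']
      _ ≤ (k : ℝ)⁻¹ * (2 * ‖φ‖) := by
          gcongr
          exact abs_log_feynmanKac_pow_one_sub_le hP heig k x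
  exact sub_eq_zero.1 (tendsto_nhds_unique ((hQ V x).sub_const p) hdiff)

/-- For `ψ = log (M e^g)`, the potential `V + g - ψ` has eigenfunction `e^{φ + ψ}` and the same
eigenvalue as `V`. -/
theorem IsPressure.apply_add_sub_eq [Nonempty X] (hQ : IsPressure P Q) (hP : IsMarkovOperator P)
    {g ψ : C(X, ℝ)} (hψ : expMap ψ = doobTransform (feynmanKac P V) p φ (expMap g)) :
    Q (V + g - ψ) = p := by
  refine hQ.eq_of_eigenfunction hP (φ := φ + ψ) ?_
  rw [expMap_add, feynmanKac_expMap_mul V, ← expMap_add, hψ]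
  congr 4
  abel

theorem IsEquilibrium.integral_le_integral [Nonempty X] [MeasurableSpace X]
    [OpensMeasurableSpace X] {σ : Measure X} [IsFiniteMeasure σ] (hσ : IsEquilibrium Q V σ)
    (hQ : IsPressure P Q) (hP : IsMarkovOperator P)
    (heig : feynmanKac P V (expMap φ) = Real.exp p • expMap φ) {g ψ : C(X, ℝ)}
    (hψ : expMap ψ = doobTransform (feynmanKac P V) p φ (expMap g)) :
    ∫ x, g x ∂σ ≤ ∫ x, ψ x ∂σ := by
  have h := hσ (V + g - ψ)
  rw [hQ.apply_add_sub_eq hP hψ, hQ.eq_of_eigenfunction hP heig] at h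
  have hsplit : ∫ x, (V + g - ψ) x ∂σ = ∫ x, V x ∂σ + ∫ x, g x ∂σ - ∫ x, ψ x ∂σ := by
    simp only [ContinuousMap.sub_apply, ContinuousMap.add_apply]
    rw [integral_sub _ (integrable_continuousMap σ ψ), integral_add]
    all_goals apply_rules [Integrable.add, integrable_continuousMap]
  linarith

/-- From `exp t ≤ 1 + t + t ^ 2` for `|t| ≤ 1` and `1 + s ≤ exp s`. -/
theorem IsMarkovOperator.le_apply_add_of_expMap_eq {M : C(X, ℝ) →L[ℝ] C(X, ℝ)}
    (hM : IsMarkovOperator M) {f ψ : C(X, ℝ)} {ε : ℝ} (hε : 0 < ε) (hsmall : ε * ‖f‖ ≤ 1)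
    (hψ : expMap ψ = M (expMap (ε • f))) (x : X) : ψ x ≤ ε * M f x + ε ^ 2 * ‖f‖ ^ 2 := by
  have hexp : expMap (ε • f) ≤ (1 + ε ^ 2 * ‖f‖ ^ 2) • (1 : C(X, ℝ)) + ε • f := fun y => by
    have habs : |ε * f y| ≤ ε * ‖f‖ := by
      rw [abs_mul, abs_of_pos hε]
      exact mul_le_mul_of_nonneg_left (f.norm_coe_le_norm y) hε.le
    have hsq : (ε * f y) ^ 2 ≤ ε ^ 2 * ‖f‖ ^ 2 := by
      rw [← mul_pow]
      exact sq_le_sq.2 (habs.trans (le_abs_self _))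
    have htaylor := (abs_le.1 (Real.abs_exp_sub_one_sub_id_le (habs.trans hsmall))).2
    change Real.exp (ε * f y) ≤ (1 + ε ^ 2 * ‖f‖ ^ 2) * 1 + ε * f y
    linarith
  have hMexp : Real.exp (ψ x) ≤ 1 + ε ^ 2 * ‖f‖ ^ 2 + ε * M f x := by
    have h := hM.monotone hexp x
    rw [← hψ] at h
    simpa [hM.map_one] using h
  linarith [Real.add_one_le_exp (ψ x)]

theorem IsMarkovOperator.isInvariantMeasure_of_forall_integral_le [MeasurableSpace X]
    [OpensMeasurableSpace X] {M : C(X, ℝ) →L[ℝ] C(X, ℝ)} (hM : IsMarkovOperator M)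
    {σ : Measure X} [IsProbabilityMeasure σ]
    (h : ∀ g ψ, expMap ψ = M (expMap g) → ∫ x, g x ∂σ ≤ ∫ x, ψ x ∂σ) :
    IsInvariantMeasure M σ := by
  have hle (f : C(X, ℝ)) : ∫ x, f x ∂σ ≤ ∫ x, M f x ∂σ := by
    have hlim : Tendsto (fun ε : ℝ => ∫ x, M f x ∂σ + ε * ‖f‖ ^ 2) (𝓝[>] 0)
        (𝓝 (∫ x, M f x ∂σ)) :=
      (Continuous.tendsto' (by fun_prop) 0 _ (by simp)).mono_left nhdsWithin_le_nhds
    have hsmall : ∀ᶠ ε : ℝ in 𝓝[>] 0, ε * ‖f‖ < 1 :=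
      ((Continuous.tendsto' (by fun_prop) 0 0 (by simp)).mono_left
        nhdsWithin_le_nhds).eventually_lt_const one_pos
    refine ge_of_tendsto hlim ?_
    filter_upwards [hsmall, self_mem_nhdsWithin] with ε hε hpos
    obtain ⟨ψ, hψ⟩ := exists_expMap_eq
      (hM.apply_pos (f := expMap (ε • f)) fun _ => Real.exp_pos _)
    have hint := calc ε * ∫ x, f x ∂σ = ∫ x, (ε • f) x ∂σ := (integral_const_mul ε _).symm
      _ ≤ ∫ x, ψ x ∂σ := h _ _ hψ
      _ ≤ ∫ x, (ε * M f x + ε ^ 2 * ‖f‖ ^ 2) ∂σ :=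
        integral_mono (integrable_continuousMap σ ψ)
          (((integrable_continuousMap σ (M f)).const_mul ε).add (integrable_const _))
          (hM.le_apply_add_of_expMap_eq hpos hε.le hψ)
      _ = ε * (∫ x, M f x ∂σ + ε * ‖f‖ ^ 2) := by
        rw [integral_add ((integrable_continuousMap σ (M f)).const_mul ε) (integrable_const _),
          integral_const_mul, integral_const, probReal_univ, one_smul]
        ring
    exact le_of_mul_le_mul_left hint hpos
  refine fun f => le_antisymm ?_ (hle f)
  simpa [integral_neg] using hle (-f)

theorem IsEquilibrium.isInvariantMeasure [Nonempty X] [MeasurableSpace X]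
    [OpensMeasurableSpace X] {σ : Measure X} [IsProbabilityMeasure σ] (hσ : IsEquilibrium Q V σ)
    (hQ : IsPressure P Q) (hP : IsMarkovOperator P)
    (heig : feynmanKac P V (expMap φ) = Real.exp p • expMap φ) :
    IsInvariantMeasure (doobTransform (feynmanKac P V) p φ) σ :=
  (isMarkovOperator_doobTransform (monotone_feynmanKac hP V)
    heig).isInvariantMeasure_of_forall_integral_le fun _ _ => hσ.integral_le_integral hQ hP heig

theorem exp_smul_expMap_le_feynmanKac_pow_one (hP : IsMarkovOperator P)
    (heig : feynmanKac P V (expMap φ) = Real.exp p • expMap φ) (W : C(X, ℝ)) (k : ℕ) :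
    Real.exp (k * p) •
        expMap (φ + (fun g => doobTransform (feynmanKac P V) p φ (W - V + g))^[k] (-φ)) ≤
      (feynmanKac P W ^ k) 1 := by
  have hM := isMarkovOperator_doobTransform (monotone_feynmanKac hP V) heig
  induction k with
  | zero => simp [expMap_zero]
  | succ k ih =>
    set M := doobTransform (feynmanKac P V) p φ
    set g := (fun g => M (W - V + g))^[k] (-φ)
    have hjensen : expMap (M (W - V + g)) ≤ M (expMap (W - V) * expMap g) := by
      rw [← expMap_add]
      exact fun x => hM.exp_apply_le _ x
    calc Real.exp ((k + 1 : ℕ) * p) • expMap (φ + (fun g => M (W - V + g))^[k + 1] (-φ))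
        = Real.exp (k * p) • Real.exp p • (expMap φ * expMap (M (W - V + g))) := by
          rw [Function.iterate_succ_apply', expMap_add, smul_smul, ← Real.exp_add]
          push_cast
          rw [add_one_mul]
      _ ≤ Real.exp (k * p) • Real.exp p • (expMap φ * M (expMap (W - V) * expMap g)) := by
          gcongr
          exact fun x => (Real.exp_pos (φ x)).le
      _ = feynmanKac P W (Real.exp (k * p) • expMap (φ + g)) := by
          rw [map_smul, expMap_add, feynmanKac_expMap_mul V]
      _ ≤ (feynmanKac P W ^ (k + 1)) 1 := by
          rw [pow_succ', mul_apply_eq_comp]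
          exact monotone_feynmanKac hP W ih

theorem IsInvariantMeasure.integral_iterate_add [MeasurableSpace X] [OpensMeasurableSpace X]
    {M : C(X, ℝ) →L[ℝ] C(X, ℝ)} {σ : Measure X} [IsFiniteMeasure σ]
    (hσ : IsInvariantMeasure M σ) (f g : C(X, ℝ)) (k : ℕ) :
    ∫ x, (fun g => M (f + g))^[k] g x ∂σ = k * ∫ x, f x ∂σ + ∫ x, g x ∂σ := by
  induction k with
  | zero => simp
  | succ k ih =>
    rw [Function.iterate_succ_apply', hσ]
    simp only [ContinuousMap.add_apply]
    rw [integral_add (integrable_continuousMap σ f) (integrable_continuousMap σ _), ih]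
    push_cast
    ring

theorem IsInvariantMeasure.add_integral_sub_le [MeasurableSpace X] [OpensMeasurableSpace X]
    {σ : Measure X} [IsProbabilityMeasure σ]
    (hσ : IsInvariantMeasure (doobTransform (feynmanKac P V) p φ) σ) (hP : IsMarkovOperator P)
    (heig : feynmanKac P V (expMap φ) = Real.exp p • expMap φ) (W : C(X, ℝ)) {k : ℕ}
    (hk : k ≠ 0) :
    p + ∫ x, (W - V) x ∂σ ≤ ∫ x, (k : ℝ)⁻¹ * Real.log ((feynmanKac P W ^ k) 1 x) ∂σ := by
  set g := (fun g => doobTransform (feynmanKac P V) p φ (W - V + g))^[k] (-φ) with hg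
  have hle (x : X) : k * p + (φ x + g x) ≤ Real.log ((feynmanKac P W ^ k) 1 x) := by
    have h : Real.exp (k * p) * Real.exp (φ x + g x) ≤ (feynmanKac P W ^ k) 1 x :=
      exp_smul_expMap_le_feynmanKac_pow_one hP heig W k x
    rwa [← Real.exp_add, ← Real.le_log_iff_exp_le (feynmanKac_pow_one_pos hP W k x)] at h
  have hlog : Continuous fun x => Real.log ((feynmanKac P W ^ k) 1 x) :=
    (ContinuousMap.continuous _).log fun x => (feynmanKac_pow_one_pos hP W k x).ne'
  have hk' : 0 < (k : ℝ) := by positivity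
  rw [integral_const_mul, ← div_eq_inv_mul, le_div_iff₀' hk']
  calc k * (p + ∫ x, (W - V) x ∂σ) = ∫ x, (k * p + (φ x + g x)) ∂σ := by
        rw [integral_add (integrable_const _), integral_add, hg, hσ.integral_iterate_add]
        · simp [integral_neg]
          ring
        all_goals apply_rules [Integrable.add, integrable_continuousMap]
    _ ≤ ∫ x, Real.log ((feynmanKac P W ^ k) 1 x) ∂σ :=
        integral_mono ((integrable_const _).add (integrable_continuousMap σ (φ + g)))
          (integrable_continuousMap σ ⟨_, hlog⟩) hle

theorem IsInvariantMeasure.isEquilibrium [Nonempty X] [MeasurableSpace X]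
    [OpensMeasurableSpace X] {σ : Measure X} [IsProbabilityMeasure σ]
    (hσ : IsInvariantMeasure (doobTransform (feynmanKac P V) p φ) σ) (hQ : IsPressure P Q)
    (hP : IsMarkovOperator P) (heig : feynmanKac P V (expMap φ) = Real.exp p • expMap φ) :
    IsEquilibrium Q V σ := fun W => by
  have hmeas (k : ℕ) : AEStronglyMeasurable
      (fun x => (k : ℝ)⁻¹ * Real.log ((feynmanKac P W ^ k) 1 x)) σ :=
    ((ContinuousMap.measurable _).log.const_mul _).aestronglyMeasurable
  have hlim : Tendsto (fun k : ℕ => ∫ x, (k : ℝ)⁻¹ * Real.log ((feynmanKac P W ^ k) 1 x) ∂σ) atTop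
      (𝓝 (∫ _, Q W ∂σ)) :=
    tendsto_integral_of_dominated_convergence (fun _ => ‖W‖) hmeas (integrable_const _)
      (fun k => ae_of_all _ (abs_inv_mul_log_feynmanKac_pow_one_le hP W k))
      (ae_of_all _ (hQ W))
  have hle : p + ∫ x, (W - V) x ∂σ ≤ ∫ _, Q W ∂σ :=
    ge_of_tendsto hlim <| (eventually_ne_atTop 0).mono fun k hk =>
      hσ.add_integral_sub_le hP heig W hk
  simp only [ContinuousMap.sub_apply, integral_const, probReal_univ, one_smul] at hle
  rw [integral_sub (integrable_continuousMap σ W) (integrable_continuousMap σ V)] at hle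
  rw [hQ.eq_of_eigenfunction hP heig]
  linarith

end FeynmanKac

section Eigentriple

variable {X : Type*} [TopologicalSpace X] [MeasurableSpace X] [OpensMeasurableSpace X]
  {σ : Measure X}

theorem integral_withDensity_ofReal {r : C(X, ℝ)} (hr : 0 ≤ r) (f : C(X, ℝ)) :
    ∫ x, f x ∂σ.withDensity (fun x => ENNReal.ofReal (r x)) = ∫ x, r x * f x ∂σ := by
  rw [integral_withDensity_eq_integral_toReal_smul r.measurable.ennreal_ofReal
    (ae_of_all _ fun _ => ENNReal.ofReal_lt_top)]
  refine integral_congr_ae (ae_of_all _ fun x => ?_)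
  have hrx : 0 ≤ r x := hr x
  simp only [ENNReal.toReal_ofReal hrx, smul_eq_mul]

theorem withDensity_ofReal_mul_withDensity_ofReal {r h : C(X, ℝ)} (hrh : ∀ x, r x * h x = 1)
    (hr : 0 ≤ r) :
    (σ.withDensity fun x => ENNReal.ofReal (r x)).withDensity (fun x => ENNReal.ofReal (h x)) =
      σ := by
  rw [← withDensity_mul _ r.measurable.ennreal_ofReal h.measurable.ennreal_ofReal]
  convert withDensity_one
  ext x
  have hrx : 0 ≤ r x := hr x
  simp [← ENNReal.ofReal_mul hrx, hrh]

variable [CompactSpace X]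

theorem isProbabilityMeasure_withDensity_ofReal [IsFiniteMeasure σ] {r : C(X, ℝ)} (hr : 0 ≤ r)
    (hint : ∫ x, r x ∂σ = 1) :
    IsProbabilityMeasure (σ.withDensity fun x => ENNReal.ofReal (r x)) :=
  ⟨by rw [withDensity_apply _ MeasurableSet.univ, Measure.restrict_univ,
    ← ofReal_integral_eq_lintegral_ofReal (integrable_continuousMap σ r)
      (ae_of_all _ fun x => hr x), hint, ENNReal.ofReal_one]⟩

/-- `h > 0` is an eigenfunction of `T` and `μ` an eigenmeasure of the dual of `T`, both for the
eigenvalue `lam`, with the normalisation `⟨h, μ⟩ = 1`. -/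
structure IsEigentriple (T : C(X, ℝ) →L[ℝ] C(X, ℝ)) (lam : ℝ) (h : C(X, ℝ)) (μ : Measure X) :
    Prop where
  pos : ∀ x, 0 < h x
  apply_eq : T h = lam • h
  integral_apply : ∀ f : C(X, ℝ), ∫ x, T f x ∂μ = lam * ∫ x, f x ∂μ
  integral_eq_one : ∫ x, h x ∂μ = 1

variable {T : C(X, ℝ) →L[ℝ] C(X, ℝ)} {p : ℝ} {φ : C(X, ℝ)}

theorem IsInvariantMeasure.exists_isEigentriple [IsProbabilityMeasure σ]
    (hσ : IsInvariantMeasure (doobTransform T p φ) σ)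
    (heig : T (expMap φ) = Real.exp p • expMap φ) :
    ∃ (h : C(X, ℝ)) (μ : Measure X), IsProbabilityMeasure μ ∧ IsEigentriple T (Real.exp p) h μ ∧
      σ = μ.withDensity fun x => ENNReal.ofReal (h x) := by
  obtain ⟨c, hc⟩ : ∃ c, c = ∫ x, expMap (-φ) x ∂σ := ⟨_, rfl⟩
  have hc0 : 0 < c := hc ▸ integral_exp_pos (integrable_continuousMap σ (expMap (-φ)))
  set r : C(X, ℝ) := c⁻¹ • expMap (-φ) with hr
  have hr0 : 0 ≤ r := fun x => mul_nonneg (inv_nonneg.2 hc0.le) (Real.exp_pos _).le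
  have hrh (x : X) : r x * (c • expMap φ) x = 1 := by
    change c⁻¹ * Real.exp (-φ x) * (c * Real.exp (φ x)) = 1
    rw [Real.exp_neg]
    field_simp
  have hrint : ∫ x, r x ∂σ = 1 := by
    change ∫ x, c⁻¹ * expMap (-φ) x ∂σ = 1
    rw [integral_const_mul, ← hc, inv_mul_cancel₀ hc0.ne']
  refine ⟨c • expMap φ, _, isProbabilityMeasure_withDensity_ofReal hr0 hrint,
    ⟨fun x => mul_pos hc0 (Real.exp_pos _), by rw [map_smul, heig, smul_comm], fun f => ?_, ?_⟩,
    (withDensity_ofReal_mul_withDensity_ofReal hrh hr0).symm⟩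
  · have hTf : r * T f = Real.exp p • doobTransform T p φ (r * f) := by
      have hcancel : T (expMap φ * (r * f)) = c⁻¹ • T f := by
        rw [hr, smul_mul_assoc, mul_smul_comm, ← mul_assoc, expMap_mul_expMap_neg, one_mul,
          map_smul]
      rw [doobTransform_apply, hcancel, mul_smul_comm, smul_smul, ← Real.exp_add, add_neg_cancel,
        Real.exp_zero, one_smul, mul_smul_comm, hr, smul_mul_assoc]
    rw [integral_withDensity_ofReal hr0, integral_withDensity_ofReal hr0]
    calc ∫ x, (r * T f) x ∂σ = Real.exp p * ∫ x, doobTransform T p φ (r * f) x ∂σ := by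
          rw [hTf, ← integral_const_mul]
          rfl
      _ = Real.exp p * ∫ x, (r * f) x ∂σ := by rw [hσ]
  · rw [integral_withDensity_ofReal hr0]
    simp only [hrh, integral_const, probReal_univ, smul_eq_mul, mul_one]

end Eigentriple

section EquilibriumState

variable {X : Type*} [MetricSpace X] [CompactSpace X] [Nonempty X] [MeasurableSpace X]
  [BorelSpace X] {P : C(X, ℝ) →L[ℝ] C(X, ℝ)} {Q : C(X, ℝ) → ℝ} {V : C(X, ℝ)} {a q C : ℝ≥0}

theorem IsPressure.exists_isEigentriple_forall_isEquilibrium_iff (hQ : IsPressure P Q)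
    (hP : IsMarkovOperator P) (hT : IsDoeblinFortet (feynmanKac P V) a q C) :
    ∃ lam h μ, 0 < lam ∧ IsProbabilityMeasure μ ∧ IsEigentriple (feynmanKac P V) lam h μ ∧
      ∀ σ : Measure X, IsProbabilityMeasure σ →
        (IsEquilibrium Q V σ ↔ σ = μ.withDensity fun x => ENNReal.ofReal (h x)) := by
  obtain ⟨p, φ, L, hp, hφ, heig⟩ := hT.exists_eigenfunction
  have hM := isMarkovOperator_doobTransform hT.monotone heig
  obtain ⟨ν, hνprob, hν⟩ := hM.exists_isInvariantMeasure
  obtain ⟨h, μ, hμ, htriple, hνμ⟩ := hν.exists_isEigentriple heig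
  refine ⟨Real.exp p, h, μ, Real.exp_pos p, hμ, htriple, fun σ _ => ?_⟩
  rw [← hνμ]
  refine ⟨fun hσ => ?_, fun hσ => hσ ▸ hν.isEquilibrium hQ hP heig⟩
  exact hT.eq_of_isInvariantMeasure_doobTransform hp heig hφ
    (hσ.isInvariantMeasure hQ hP heig) hν

end EquilibriumState

section Attainability

theorem attain_subset_attainDom {E : Type*} [AddCommGroup E] [TopologicalSpace E]
    (S : E → E) (K B : Set E) (n : ℕ) : attain S K B n ⊆ attainDom S K B :=
  (Set.subset_iUnion _ n).trans subset_closure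

theorem subset_attainDom {E : Type*} [AddCommGroup E] [TopologicalSpace E]
    (S : E → E) (K B : Set E) : B ⊆ attainDom S K B :=
  attain_subset_attainDom S K B 0

theorem add_mem_attainDom {E : Type*} [AddCommGroup E] [TopologicalSpace E] [ContinuousAdd E]
    {S : E → E} {K B : Set E} (hS : Continuous S) {u y : E}
    (hu : u ∈ attainDom S K B) (hy : y ∈ K) : S u + y ∈ attainDom S K B := by
  refine map_mem_closure (f := fun v => S v + y) (by fun_prop) hu fun v hv => ?_
  obtain ⟨n, hn⟩ := Set.mem_iUnion.1 hv
  exact Set.mem_iUnion.2 ⟨n + 1, Set.add_mem_add ⟨v, hn, rfl⟩ hy⟩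

theorem isCompact_attain {E : Type*} [AddCommGroup E] [TopologicalSpace E] [ContinuousAdd E]
    {S : E → E} {K B : Set E} (hS : Continuous S) (hK : IsCompact K) (hB : IsCompact B) :
    ∀ n, IsCompact (attain S K B n)
  | 0 => hB
  | n + 1 => ((isCompact_attain hS hK hB n).image hS).add hK

omit [InnerProductSpace ℝ H] [CompleteSpace H] in
theorem CondB.exists_attain_subset_closedBall {S : H → H} {K : Set H} (hB : CondB S K)
    (hS : Continuous S) (hK : IsCompact K) :
    ∃ R : ℝ, 0 < R ∧ ∀ n, attain S K {0} n ⊆ Metric.closedBall 0 R := by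
  obtain ⟨ρ, hρ, k₀, -, hk⟩ := hB
  have hbdd : Bornology.IsBounded (⋃ n ∈ Finset.range (k₀ 0), attain S K {0} n) :=
    (Bornology.isBounded_biUnion_finset _).2 fun n _ =>
      (isCompact_attain hS hK isCompact_singleton n).isBounded
  obtain ⟨R, hR⟩ := hbdd.subset_closedBall 0
  refine ⟨max R ρ, lt_max_of_lt_right hρ, fun n => ?_⟩
  rcases lt_or_ge n (k₀ 0) with hn | hn
  · have hmem : n ∈ (Finset.range (k₀ 0) : Set ℕ) := Finset.mem_coe.2 (Finset.mem_range.2 hn)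
    exact ((Set.subset_biUnion_of_mem (u := attain S K {0}) hmem).trans hR).trans
      (Metric.closedBall_subset_closedBall (le_max_left R ρ))
  · have hsub := hk 0 le_rfl n hn
    rw [Metric.closedBall_zero] at hsub
    exact hsub.trans (Metric.closedBall_subset_closedBall (le_max_right R ρ))

omit [InnerProductSpace ℝ H] [CompleteSpace H] in
theorem CondB.exists_attainDom_subset_closedBall {S : H → H} {K : Set H} (hB : CondB S K)
    (hS : Continuous S) (hK : IsCompact K) :
    ∃ R : ℝ, 0 < R ∧ attainDom S K {0} ⊆ Metric.closedBall 0 R := by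
  obtain ⟨R, hR, hsub⟩ := hB.exists_attain_subset_closedBall hS hK
  exact ⟨R, hR, closure_minimal (Set.iUnion_subset hsub) Metric.isClosed_closedBall⟩

/-- The projection `projB e N` as a continuous linear map. -/
def projL (e : HilbertBasis ℕ ℝ H) (N : ℕ) : H →L[ℝ] H :=
  ∑ j ∈ Finset.range N, (innerSL ℝ (e j)).smulRight (e j)

omit [CompleteSpace H] in
theorem projL_apply (e : HilbertBasis ℕ ℝ H) (N : ℕ) (u : H) : projL e N u = projB e N u := by
  simp [projB, projL, HilbertBasis.repr_apply_apply]

omit [CompleteSpace H] in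
theorem projB_sub (e : HilbertBasis ℕ ℝ H) (N : ℕ) (u v : H) :
    projB e N (u - v) = projB e N u - projB e N v := by
  simp only [← projL_apply, map_sub]

omit [CompleteSpace H] in
theorem abs_repr_le_norm (e : HilbertBasis ℕ ℝ H) (v : H) (j : ℕ) : |e.repr v j| ≤ ‖v‖ := by
  simpa [e.repr_apply_apply, e.orthonormal.1 j] using abs_real_inner_le_norm (e j) v

omit [CompleteSpace H] in
theorem totallyBounded_projB_image {s : Set H} (hs : Bornology.IsBounded s)
    (e : HilbertBasis ℕ ℝ H) (N : ℕ) : TotallyBounded (projB e N '' s) := by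
  obtain ⟨M, hM⟩ := hs.exists_norm_le
  have hbox : IsCompact ((fun c : Fin N → ℝ => ∑ i, c i • (e i : H)) ''
      (Set.univ.pi fun _ => Set.Icc (-M) M)) :=
    (isCompact_univ_pi fun _ => isCompact_Icc).image (by fun_prop)
  refine hbox.totallyBounded.subset ?_
  rintro _ ⟨u, hu, rfl⟩
  refine ⟨fun i => e.repr u i, fun i _ => ?_, ?_⟩
  · exact abs_le.1 ((abs_repr_le_norm e u i).trans (hM u hu))
  · simp only [projB, Finset.sum_range]

theorem totallyBounded_of_forall_exists_approx {E : Type*} [PseudoMetricSpace E] {s : Set E}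
    (h : ∀ ε > 0, ∃ A : Set E, TotallyBounded A ∧ ∀ x ∈ s, ∃ a ∈ A, dist x a < ε) :
    TotallyBounded s := by
  refine Metric.totallyBounded_iff.2 fun ε hε => ?_
  obtain ⟨A, hA, hsA⟩ := h (ε / 2) (half_pos hε)
  obtain ⟨t, ht, hAt⟩ := Metric.totallyBounded_iff.1 hA (ε / 2) (half_pos hε)
  refine ⟨t, ht, fun x hx => ?_⟩
  obtain ⟨a, ha, hxa⟩ := hsA x hx
  obtain ⟨y, hy, hay⟩ := Set.mem_iUnion₂.1 (hAt ha)
  refine Set.mem_iUnion₂.2 ⟨y, hy, ?_⟩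
  calc dist x y ≤ dist x a + dist a y := dist_triangle _ _ _
    _ < ε / 2 + ε / 2 := add_lt_add hxa hay
    _ = ε := add_halves ε

omit [CompleteSpace H] in
theorem CondC.exists_norm_sub_le {S : H → H} {e : HilbertBasis ℕ ℝ H} (hC : CondC S e) {R : ℝ}
    (hR : 0 < R) : ∃ L : ℝ≥0, ∀ u ∈ Metric.closedBall (0 : H) R,
      ∀ v ∈ Metric.closedBall (0 : H) R, ‖S u - S v‖ ≤ L * ‖u - v‖ := by
  obtain ⟨γ, hγ, -, -, hS⟩ := hC R hR
  refine ⟨(γ 0).toNNReal, fun u hu v hv => ?_⟩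
  rw [Real.coe_toNNReal _ (hγ 0).le]
  simpa [projB] using hS 0 u hu v hv

omit [CompleteSpace H] in
theorem CondC.totallyBounded_image_closedBall {S : H → H} {e : HilbertBasis ℕ ℝ H}
    (hC : CondC S e) {R : ℝ} (hR : 0 < R) :
    TotallyBounded (S '' Metric.closedBall 0 R) := by
  obtain ⟨L, hL⟩ := hC.exists_norm_sub_le hR
  obtain ⟨γ, hγpos, -, hγ, hS⟩ := hC R hR
  have h0 : (0 : H) ∈ Metric.closedBall (0 : H) R := Metric.mem_closedBall_self hR.le
  have hbdd : Bornology.IsBounded (S '' Metric.closedBall 0 R) := by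
    refine Metric.isBounded_image_iff.2 ⟨L * (R + R), fun u hu v hv => ?_⟩
    rw [dist_eq_norm]
    refine (hL u hu v hv).trans ?_
    gcongr
    exact (norm_sub_le u v).trans
      (add_le_add (mem_closedBall_zero_iff.1 hu) (mem_closedBall_zero_iff.1 hv))
  refine totallyBounded_of_forall_exists_approx fun ε hε => ?_
  obtain ⟨N, hN⟩ : ∃ N, γ N * R < ε :=
    ((hγ.mul_const R).eventually (gt_mem_nhds (by simpa using hε))).exists
  refine ⟨(· + (S 0 - projB e N (S 0))) '' (projB e N '' (S '' Metric.closedBall 0 R)),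
    (totallyBounded_projB_image hbdd e N).image (uniformContinuous_id.add_const _), ?_⟩
  rintro _ ⟨u, hu, rfl⟩
  refine ⟨_, ⟨_, ⟨_, ⟨u, hu, rfl⟩, rfl⟩, rfl⟩, ?_⟩
  calc dist (S u) (projB e N (S u) + (S 0 - projB e N (S 0)))
      = ‖S u - S 0 - projB e N (S u - S 0)‖ := by
        rw [dist_eq_norm, projB_sub]; congr 1; abel
    _ ≤ γ N * ‖u - 0‖ := hS N u hu 0 h0
    _ ≤ γ N * R := by
        have := hγpos N
        gcongr
        simpa using hu
    _ < ε := hN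

theorem isCompact_attainDom {S : H → H} {K : Set H} {e : HilbertBasis ℕ ℝ H}
    (hS : Continuous S) (hK : IsCompact K) (hB : CondB S K) (hC : CondC S e) :
    IsCompact (attainDom S K {0}) := by
  obtain ⟨R, hR, hsub⟩ := hB.exists_attain_subset_closedBall hS hK
  have hcompact : IsCompact (closure (S '' Metric.closedBall 0 R)) :=
    (hC.totallyBounded_image_closedBall hR).closure.isCompact_of_isClosed isClosed_closure
  have htb : TotallyBounded ({0} ∪ (closure (S '' Metric.closedBall 0 R) + K)) :=
    (isCompact_singleton.union (hcompact.add hK)).totallyBounded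
  refine (htb.subset (Set.iUnion_subset fun n => ?_)).closure.isCompact_of_isClosed
    isClosed_closure
  cases n with
  | zero => exact Set.subset_union_left
  | succ n =>
    exact (Set.add_subset_add_right ((Set.image_mono (hsub n)).trans subset_closure)).trans
      Set.subset_union_right

end Attainability

section Contraction

theorem norm_iterate_mul_le {E : Type*} [NormedAddCommGroup E] {S : E → E} {R r a : ℝ} {n : ℕ}
    (hr : 0 ≤ r) (hrR : r ≤ R) (ha : 0 ≤ a) (ha1 : a ≤ 1)
    (hS : ∀ u ∈ Metric.closedBall (0 : E) R, ‖S^[n] u‖ ≤ max (a * ‖u‖) r)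
    {u : E} (hu : u ∈ Metric.closedBall 0 R) (j : ℕ) :
    ‖S^[n * j] u‖ ≤ max (a ^ j * R) r := by
  have hR : 0 ≤ R := hr.trans hrR
  induction j with
  | zero => simpa using Or.inl (mem_closedBall_zero_iff.1 hu)
  | succ j ih =>
    have hball : S^[n * j] u ∈ Metric.closedBall (0 : E) R :=
      mem_closedBall_zero_iff.2
        (ih.trans (max_le (mul_le_of_le_one_left hR (pow_le_one₀ ha ha1)) hrR))
    calc ‖S^[n * (j + 1)] u‖ = ‖S^[n] (S^[n * j] u)‖ := by
          rw [← Function.iterate_add_apply, mul_add_one, add_comm]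
      _ ≤ max (a * ‖S^[n * j] u‖) r := hS _ hball
      _ ≤ max (a * max (a ^ j * R) r) r := by gcongr
      _ = max (a ^ (j + 1) * R) (max (a * r) r) := by
          rw [mul_max_of_nonneg _ _ ha, max_assoc, pow_succ', mul_assoc]
      _ = max (a ^ (j + 1) * R) r := by rw [max_eq_right (mul_le_of_le_one_left hr ha1)]

omit [CompleteSpace H] in
theorem CondA.exists_norm_iterate_le {S : H → H} (hA : CondA S) (R : ℝ) {r : ℝ} (hr : 0 < r) :
    ∃ n, ∀ u ∈ Metric.closedBall (0 : H) R, ‖S^[n] u‖ ≤ r := by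
  have hrR : r < max R r + 1 := (le_max_right R r).trans_lt (lt_add_one _)
  obtain ⟨-, -, a, ha0, ha1, n₀, -, -, hn⟩ := hA.2 (max R r + 1) r hr hrR
  have hlim : Tendsto (fun j : ℕ => a ^ j * (max R r + 1)) atTop (𝓝 0) := by
    simpa using (tendsto_pow_atTop_nhds_zero_of_lt_one ha0.le ha1).mul_const (max R r + 1)
  obtain ⟨j, hj⟩ := (hlim.eventually (gt_mem_nhds hr)).exists
  have hsub : R ≤ max R r + 1 := (le_max_left R r).trans (lt_add_one _).le
  exact ⟨n₀ * j, fun u hu => (norm_iterate_mul_le hr.le hrR.le ha0.le ha1.le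
    (fun v hv => hn v hv n₀ le_rfl) (Metric.closedBall_subset_closedBall hsub hu) j).trans
    (max_le hj.le le_rfl)⟩

omit [CompleteSpace H] in
theorem CondA.continuous {S : H → H} (hA : CondA S) : Continuous S := hA.1.continuous

end Contraction

section Translation

theorem integral_abs_sub_translate_le {d : ℝ → ℝ} {L : ℝ≥0} {a b : ℝ} (hd : LipschitzWith L d)
    (hab : a ≤ b) (hsupp : Function.support d ⊆ Set.Icc a b) (s : ℝ) :
    ∫ x, |d (x - s) - d x| ≤ 2 * (b - a) * L * |s| := by
  have hzero : ∀ x ∉ Set.Icc a b, d x = 0 := fun x hx =>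
    Function.notMem_support.1 fun h => hx (hsupp h)
  set A : Set ℝ := Set.Icc a b ∪ Set.Icc (a + s) (b + s)
  have hA : volume A ≤ ENNReal.ofReal (2 * (b - a)) := by
    refine (measure_union_le _ _).trans ?_
    rw [Real.volume_Icc, Real.volume_Icc, add_sub_add_right_eq_sub, two_mul,
      ENNReal.ofReal_add (sub_nonneg.2 hab) (sub_nonneg.2 hab)]
  have hlip : ∀ x, |d (x - s) - d x| ≤ L * |s| := fun x => by
    simpa [Real.dist_eq] using hd.dist_le_mul (x - s) x
  have hrestrict : ∫ x in A, |d (x - s) - d x| = ∫ x, |d (x - s) - d x| := by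
    refine setIntegral_eq_integral_of_forall_compl_eq_zero fun x hx => ?_
    rw [Set.mem_union, not_or] at hx
    have hshift : x - s ∉ Set.Icc a b := fun h =>
      hx.2 ⟨by linarith [h.1], by linarith [h.2]⟩
    rw [hzero x hx.1, hzero _ hshift, sub_zero, abs_zero]
  have hAreal : volume.real A ≤ 2 * (b - a) :=
    ENNReal.toReal_le_of_le_ofReal (by linarith) hA
  calc ∫ x, |d (x - s) - d x| = ∫ x in A, |d (x - s) - d x| := hrestrict.symm
    _ ≤ ‖∫ x in A, |d (x - s) - d x|‖ := Real.le_norm_self _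
    _ ≤ L * |s| * volume.real A :=
        norm_setIntegral_le_of_norm_le_const (hA.trans_lt ENNReal.ofReal_lt_top) fun x _ => by
          simpa using hlip x
    _ ≤ L * |s| * (2 * (b - a)) := by gcongr
    _ = 2 * (b - a) * L * |s| := by ring

theorem abs_integral_translate_sub_le {p : ℝ → ℝ} {L : ℝ≥0} {a b : ℝ} (hp : LipschitzWith L p)
    (hab : a ≤ b) (hsupp : Function.support p ⊆ Set.Icc a b) {g : ℝ → ℝ} (hg : Measurable g)
    {B : ℝ} (hB : ∀ x, |g x| ≤ B) (s : ℝ) :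
    |∫ x, g (x + s) ∂(volume.withDensity fun x => ENNReal.ofReal (p x)) -
      ∫ x, g x ∂(volume.withDensity fun x => ENNReal.ofReal (p x))|
      ≤ 2 * (b - a) * L * |s| * B := by
  -- `ENNReal.ofReal` truncates negative values, so the actual density is the positive part.
  set d : ℝ → ℝ := fun x => max (p x) 0
  have hd : LipschitzWith L d := by simpa using hp.max_const 0
  have hdsupp : Function.support d ⊆ Set.Icc a b := fun x hx =>
    hsupp fun h0 => hx (by simp [d, h0])
  have hdint : Integrable d := hd.continuous.integrable_of_hasCompactSupport
    (HasCompactSupport.intro isCompact_Icc fun x hx =>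
      Function.notMem_support.1 fun h => hx (hdsupp h))
  have hdensity (f : ℝ → ℝ) :
      ∫ x, f x ∂(volume.withDensity fun x => ENNReal.ofReal (p x)) = ∫ x, f x * d x := by
    rw [integral_withDensity_eq_integral_toReal_smul hp.continuous.measurable.ennreal_ofReal
      (by simp)]
    simp only [ENNReal.toReal_ofReal', smul_eq_mul, mul_comm, d]
  have htranslate : ∫ x, g (x + s) * d x = ∫ x, g x * d (x - s) := by
    simpa using integral_add_right_eq_self (fun x => g x * d (x - s)) s
  have hbdd : ∀ᵐ x, ‖g x‖ ≤ B := ae_of_all _ hB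
  have hgm := hg.aestronglyMeasurable (μ := volume)
  have hdiff : Integrable fun x => d (x - s) - d x := (hdint.comp_sub_right s).sub hdint
  rw [hdensity, hdensity, htranslate,
    ← integral_sub ((hdint.comp_sub_right s).bdd_mul hgm hbdd) (hdint.bdd_mul hgm hbdd)]
  calc |∫ x, (g x * d (x - s) - g x * d x)|
      ≤ ∫ x, |d (x - s) - d x| * B := by
        rw [← Real.norm_eq_abs]
        refine norm_integral_le_of_norm_le (hdiff.abs.mul_const B) (ae_of_all _ fun x => ?_)
        rw [← mul_sub, Real.norm_eq_abs, abs_mul, mul_comm]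
        exact mul_le_mul_of_nonneg_left (hB x) (abs_nonneg _)
    _ = (∫ x, |d (x - s) - d x|) * B := integral_mul_const B _
    _ ≤ 2 * (b - a) * L * |s| * B := mul_le_mul_of_nonneg_right
        (integral_abs_sub_translate_le hd hab hdsupp s) ((abs_nonneg _).trans (hB 0))

end Translation

section Independence

variable {Ω : Type*} [mΩ : MeasurableSpace Ω] {P : Measure Ω} [IsProbabilityMeasure P]

theorem integral_comp_eq_integral_integral_of_indepFun {α β : Type*} [MeasurableSpace α]
    [MeasurableSpace β] {f : Ω → α} {g : Ω → β} (hf : Measurable f) (hg : Measurable g)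
    (hfg : IndepFun f g P) {F : α → β → ℝ} (hF : Measurable (Function.uncurry F))
    (hint : Integrable (fun ω => F (f ω) (g ω)) P) :
    ∫ ω, F (f ω) (g ω) ∂P = ∫ ω, ∫ y, F (f ω) y ∂(P.map g) ∂P := by
  have := Measure.isProbabilityMeasure_map (μ := P) hf.aemeasurable
  have := Measure.isProbabilityMeasure_map (μ := P) hg.aemeasurable
  have hprod := (indepFun_iff_map_prod_eq_prod_map_map hf.aemeasurable hg.aemeasurable).1 hfg
  have hint' : Integrable (Function.uncurry F) ((P.map f).prod (P.map g)) := by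
    rwa [← hprod, integrable_map_measure hF.aestronglyMeasurable (hf.prodMk hg).aemeasurable]
  have hfubini := integral_prod _ hint'
  rw [← hprod, integral_map (hf.prodMk hg).aemeasurable hF.aestronglyMeasurable] at hfubini
  exact hfubini.trans <| integral_map hf.aemeasurable
    hF.stronglyMeasurable.integral_prod_right.aestronglyMeasurable

/-- The `σ`-algebra generated by the random variables `X i` with `i ∈ A`. -/
@[reducible]
def sigmaGenerated {ι β : Type*} [MeasurableSpace β] (X : ι → Ω → β) (A : Set ι) :
    MeasurableSpace Ω :=
  ⨆ i ∈ A, MeasurableSpace.comap (X i) inferInstance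

omit mΩ in
theorem measurable_sigmaGenerated {ι β : Type*} [MeasurableSpace β] (X : ι → Ω → β) {A : Set ι}
    {i : ι} (hi : i ∈ A) : Measurable[sigmaGenerated X A] (X i) :=
  (comap_measurable (X i)).mono
    (le_iSup₂_of_le (f := fun i (_ : i ∈ A) => MeasurableSpace.comap (X i) inferInstance)
      i hi le_rfl) le_rfl

theorem sigmaGenerated_le {ι β : Type*} [MeasurableSpace β] {X : ι → Ω → β}
    (hX : ∀ i, Measurable (X i)) (A : Set ι) : sigmaGenerated X A ≤ mΩ :=
  iSup₂_le fun i _ => (hX i).comap_le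

omit [IsProbabilityMeasure P] in
theorem indepFun_of_disjoint_sigmaGenerated {ι β : Type*} [MeasurableSpace β] {X : ι → Ω → β}
    (hX : ∀ i, Measurable (X i)) (hind : iIndepFun X P) {A B : Set ι} (h : Disjoint A B)
    {α γ : Type*} [MeasurableSpace α] [MeasurableSpace γ] {f : Ω → α} {g : Ω → γ}
    (hf : Measurable[sigmaGenerated X A] f) (hg : Measurable[sigmaGenerated X B] g) :
    IndepFun f g P :=
  (IndepFun_iff_Indep f g P).2 <| indep_of_indep_of_le_left
    (indep_of_indep_of_le_right
      (indep_iSup_of_disjoint (fun i => (hX i).comap_le) hind.iIndep h) hg.comap_le)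
    hf.comap_le

theorem abs_integral_add_smul_translate_sub_le {E : Type*} [NormedAddCommGroup E]
    [NormedSpace ℝ E] [SecondCountableTopology E] [MeasurableSpace E] [BorelSpace E]
    {Z : Ω → E} {X : Ω → ℝ} (hZ : Measurable Z) (hX : Measurable X) (hind : IndepFun Z X P)
    {p : ℝ → ℝ} {L : ℝ≥0} {a b : ℝ} (hlaw : P.map X = volume.withDensity fun x => .ofReal (p x))
    (hp : LipschitzWith L p) (hab : a ≤ b) (hsupp : Function.support p ⊆ Set.Icc a b)
    {g : E → ℝ} (hg : Measurable g) {B : ℝ} (hB : ∀ x, |g x| ≤ B) (v : E) (s : ℝ) :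
    |∫ ω, g (Z ω + (X ω + s) • v) ∂P - ∫ ω, g (Z ω + X ω • v) ∂P|
      ≤ 2 * (b - a) * L * |s| * B := by
  have := Measure.isProbabilityMeasure_map (μ := P) hX.aemeasurable
  have hmeas (t : ℝ) : Measurable (Function.uncurry fun z x => g (z + (x + t) • v)) :=
    hg.comp (measurable_fst.add ((measurable_snd.add_const t).smul_const v))
  have hfubini (t : ℝ) : ∫ ω, g (Z ω + (X ω + t) • v) ∂P
      = ∫ ω, ∫ x, g (Z ω + (x + t) • v) ∂(P.map X) ∂P :=
    integral_comp_eq_integral_integral_of_indepFun hZ hX hind (hmeas t) <|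
      Integrable.of_bound ((hmeas t).comp (hZ.prodMk hX)).aestronglyMeasurable B
        (ae_of_all _ fun ω => hB _)
  have hint (t : ℝ) : Integrable (fun ω => ∫ x, g (Z ω + (x + t) • v) ∂(P.map X)) P := by
    refine Integrable.of_bound
      ((hmeas t).stronglyMeasurable.integral_prod_right.comp_measurable hZ).aestronglyMeasurable B
      (ae_of_all _ fun ω => ?_)
    simpa using norm_integral_le_of_norm_le_const (μ := P.map X)
      (f := fun x => g (Z ω + (x + t) • v)) (ae_of_all _ fun x => hB _)
  have hfibre (z : E) :
      ‖∫ x, g (z + (x + s) • v) ∂(P.map X) - ∫ x, g (z + x • v) ∂(P.map X)‖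
        ≤ 2 * (b - a) * L * |s| * B := by
    rw [hlaw, Real.norm_eq_abs]
    exact abs_integral_translate_sub_le hp hab hsupp
      (g := fun x => g (z + x • v)) (hg.comp ((measurable_id.smul_const v).const_add z))
      (fun x => hB _) s
  have h0 := hfubini 0
  simp only [add_zero] at h0
  rw [h0, hfubini, ← integral_sub (hint s) (by simpa only [add_zero] using hint 0)]
  simpa using norm_integral_le_of_norm_le_const (μ := P) (ae_of_all _ fun ω => hfibre (Z ω))

end Independence

theorem tsum_mul_le_mul_tsum_add_tsum_nat_add {c x : ℕ → ℝ} (hc : ∀ j, 0 ≤ c j)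
    (hcs : Summable c) (hcx : Summable fun j => c j * x j) {N : ℕ} {δ : ℝ} (hδ : 0 ≤ δ)
    (hhead : ∀ j < N, x j ≤ δ) (htail : ∀ j, x j ≤ 1) :
    ∑' j, c j * x j ≤ δ * ∑' j, c j + ∑' j, c (j + N) := by
  rw [← hcx.sum_add_tsum_nat_add N]
  refine add_le_add ?_ ?_
  · calc ∑ j ∈ Finset.range N, c j * x j ≤ ∑ j ∈ Finset.range N, δ * c j :=
        Finset.sum_le_sum fun j hj => by
          rw [mul_comm]
          exact mul_le_mul_of_nonneg_right (hhead j (Finset.mem_range.1 hj)) (hc j)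
      _ = δ * ∑ j ∈ Finset.range N, c j := (Finset.mul_sum ..).symm
      _ ≤ δ * ∑' j, c j := by
        gcongr
        exact hcs.sum_le_tsum _ fun j _ => hc j
  · exact ((summable_nat_add_iff N).2 hcx).tsum_le_tsum
      (fun j => mul_le_of_le_one_right (hc _) (htail _)) ((summable_nat_add_iff N).2 hcs)

theorem msupp_eq_support {E : Type*} [TopologicalSpace E] [MeasurableSpace E] (ν : Measure E) :
    msupp ν = ν.support :=
  Set.ext fun x => (Measure.mem_support_iff_forall x).symm

theorem ae_mem_msupp {E : Type*} [TopologicalSpace E] [HereditarilyLindelofSpace E]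
    [MeasurableSpace E] (ν : Measure E) : ∀ᵐ y ∂ν, y ∈ msupp ν :=
  msupp_eq_support ν ▸ Measure.support_mem_ae

theorem measurableSet_msupp {E : Type*} [TopologicalSpace E] [MeasurableSpace E]
    [OpensMeasurableSpace E] (ν : Measure E) : MeasurableSet (msupp ν) :=
  msupp_eq_support ν ▸ Measure.isClosed_support.measurableSet

section Noise

/-- The sum `∑ b_j x_j e_j` of a coefficient sequence `x`, as a limit of partial sums, so that it
is a measurable function of `x` (with a junk value where the sums diverge). -/
def noiseSum (e : HilbertBasis ℕ ℝ H) (b : ℕ → ℝ) (x : ℕ → ℝ) : H :=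
  limUnder atTop fun n : ℕ => ∑ j ∈ Finset.range n, (b j * x j) • (e j : H)

omit [CompleteSpace H] in
theorem noiseSum_eq_of_hasSum {e : HilbertBasis ℕ ℝ H} {b x : ℕ → ℝ} {z : H}
    (h : HasSum (fun j => (b j * x j) • (e j : H)) z) : noiseSum e b x = z :=
  h.tendsto_sum_nat.limUnder_eq

variable [SecondCountableTopology H] [MeasurableSpace H] [BorelSpace H]

theorem measurable_noiseSum {α : Type*} {_ : MeasurableSpace α} {x : ℕ → α → ℝ}
    (hx : ∀ j, Measurable (x j)) (e : HilbertBasis ℕ ℝ H) (b : ℕ → ℝ) :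
    Measurable fun a => noiseSum e b fun j => x j a :=
  (StronglyMeasurable.limUnder fun _ => (Finset.measurable_sum _ fun j _ =>
    ((hx j).const_mul (b j)).smul_const (e j : H)).stronglyMeasurable).measurable

namespace CondD

variable {Ω : Type*} [mΩ : MeasurableSpace Ω] {P : Measure Ω} [IsProbabilityMeasure P]
  {e : HilbertBasis ℕ ℝ H} {η : ℕ → Ω → H} {b : ℕ → ℝ} {ξ : ℕ → ℕ → Ω → ℝ} {p : ℕ → ℝ → ℝ}

section Projections

omit [CompleteSpace H] [SecondCountableTopology H] [BorelSpace H] [IsProbabilityMeasure P]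

theorem coeff_nonneg (hD : CondD P e η b ξ p) (j : ℕ) : 0 ≤ b j := hD.1 j

theorem summable_sq (hD : CondD P e η b ξ p) : Summable fun j => b j ^ 2 := hD.2.1

theorem hasSum (hD : CondD P e η b ξ p) (k : ℕ) (ω : Ω) :
    HasSum (fun j => (b j * ξ j k ω) • (e j : H)) (η k ω) := hD.2.2.1 k ω

theorem measurable_coord (hD : CondD P e η b ξ p) (j k : ℕ) : Measurable (ξ j k) :=
  hD.2.2.2.1 j k

theorem iIndepFun_coord (hD : CondD P e η b ξ p) :
    iIndepFun (fun jk : ℕ × ℕ => ξ jk.1 jk.2) P := hD.2.2.2.2.1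

theorem map_coord (hD : CondD P e η b ξ p) (j k : ℕ) :
    P.map (ξ j k) = volume.withDensity fun x => ENNReal.ofReal (p j x) := hD.2.2.2.2.2.1 j k

theorem exists_lipschitzWith (hD : CondD P e η b ξ p) (j : ℕ) :
    ∃ L : ℝ≥0, LipschitzWith L (p j) := hD.2.2.2.2.2.2.1 j

theorem density_zero_pos (hD : CondD P e η b ξ p) (j : ℕ) : 0 < p j 0 := hD.2.2.2.2.2.2.2.1 j

theorem support_density_subset (hD : CondD P e η b ξ p) (j : ℕ) :
    Function.support (p j) ⊆ Set.Icc (-1 : ℝ) 1 := hD.2.2.2.2.2.2.2.2 j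

theorem continuous_density (hD : CondD P e η b ξ p) (j : ℕ) : Continuous (p j) :=
  (hD.exists_lipschitzWith j).choose_spec.continuous

theorem iIndepFun_coord_at (hD : CondD P e η b ξ p) (k : ℕ) :
    iIndepFun (fun j : ℕ => ξ j k) P :=
  hD.iIndepFun_coord.precomp (g := fun j : ℕ => (j, k)) fun i j h => by simpa using h

end Projections

omit [CompleteSpace H] [SecondCountableTopology H] [BorelSpace H] [IsProbabilityMeasure P] in
theorem noiseSum_coord (hD : CondD P e η b ξ p) (k : ℕ) :
    (fun ω => noiseSum e b fun j => ξ j k ω) = η k :=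
  funext fun ω => noiseSum_eq_of_hasSum (hD.hasSum k ω)

omit [IsProbabilityMeasure P] in
theorem measurable_noise_sigmaGenerated (hD : CondD P e η b ξ p) {k : ℕ} {A : Set (ℕ × ℕ)}
    (hA : ∀ j, (j, k) ∈ A) :
    Measurable[sigmaGenerated (fun jk : ℕ × ℕ => ξ jk.1 jk.2) A] (η k) := by
  rw [← hD.noiseSum_coord k]
  exact measurable_noiseSum
    (fun j => measurable_sigmaGenerated (fun jk : ℕ × ℕ => ξ jk.1 jk.2) (hA j)) e b

omit [IsProbabilityMeasure P] in
theorem measurable_noise (hD : CondD P e η b ξ p) (k : ℕ) : Measurable (η k) :=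
  (hD.measurable_noise_sigmaGenerated fun _ => Set.mem_univ _).mono
    (sigmaGenerated_le (fun jk : ℕ × ℕ => hD.measurable_coord jk.1 jk.2) _) le_rfl

omit [IsProbabilityMeasure P] in
theorem map_noise_eq (hD : CondD P e η b ξ p) (k l : ℕ) : P.map (η k) = P.map (η l) := by
  have hlaw (k : ℕ) : P.map (η k) = (Measure.infinitePi fun j =>
      (volume : Measure ℝ).withDensity fun x => ENNReal.ofReal (p j x)).map (noiseSum e b) := by
    have hcoord : Measurable fun ω j => ξ j k ω :=
      measurable_pi_lambda _ fun j => hD.measurable_coord j k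
    have hprod := (hD.iIndepFun_coord_at k).map_fun_eq_infinitePi_map fun j =>
      hD.measurable_coord j k
    simp only [hD.map_coord] at hprod
    rw [← hprod, Measure.map_map (measurable_noiseSum measurable_pi_apply e b) hcoord,
      ← hD.noiseSum_coord k, Function.comp_def]
  rw [hlaw k, hlaw l]

omit [IsProbabilityMeasure P] in
theorem exists_indepFun_noise_eq_add (hD : CondD P e η b ξ p) (j k : ℕ) :
    ∃ Z : Ω → H, Measurable Z ∧ IndepFun Z (ξ j k) P ∧
      ∀ ω, η k ω = Z ω + ξ j k ω • (b j • (e j : H)) := by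
  set X := fun jk : ℕ × ℕ => ξ jk.1 jk.2
  have hX (jk : ℕ × ℕ) : Measurable (X jk) := hD.measurable_coord jk.1 jk.2
  set Z : Ω → H := fun ω => noiseSum e b fun i => if i = j then 0 else ξ i k ω
  have hZ : Measurable[sigmaGenerated X {(j, k)}ᶜ] Z := by
    refine measurable_noiseSum (fun i => ?_) e b
    by_cases hij : i = j
    · simp only [hij, if_true, measurable_const]
    · simp only [hij, if_false]
      exact measurable_sigmaGenerated X (i := (i, k)) (by simp [hij])
  refine ⟨Z, hZ.mono (sigmaGenerated_le hX _) le_rfl,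
    indepFun_of_disjoint_sigmaGenerated hX hD.iIndepFun_coord disjoint_compl_left hZ
      (measurable_sigmaGenerated X (Set.mem_singleton (j, k))), fun ω => ?_⟩
  rw [eq_comm, ← eq_sub_iff_add_eq, smul_smul, mul_comm]
  refine noiseSum_eq_of_hasSum (((hD.hasSum k ω).sub (hasSum_ite_eq j _)).congr_fun fun i => ?_)
  by_cases hij : i = j <;> simp [hij]

theorem exists_abs_integral_add_smul_sub_le (hD : CondD P e η b ξ p) {j : ℕ} (hb : b j ≠ 0)
    (k : ℕ) :
    ∃ C : ℝ≥0, ∀ (g : H → ℝ) (B : ℝ), Measurable g → (∀ x, |g x| ≤ B) → ∀ t : ℝ,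
      |∫ y, g (y + t • (e j : H)) ∂(P.map (η k)) - ∫ y, g y ∂(P.map (η k))| ≤ C * |t| * B := by
  obtain ⟨L, hL⟩ := hD.exists_lipschitzWith j
  obtain ⟨Z, hZ, hind, hη⟩ := hD.exists_indepFun_noise_eq_add j k
  have hbpos : 0 < b j := (hD.coeff_nonneg j).lt_of_ne' hb
  refine ⟨4 * L / (b j).toNNReal, fun g B hg hB t => ?_⟩
  have hshift (ω : Ω) : η k ω + t • (e j : H)
      = Z ω + (ξ j k ω + t / b j) • (b j • (e j : H)) := by
    rw [hη, add_smul, smul_smul (t / b j), div_mul_cancel₀ t hb, add_assoc]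
  have hgt : Measurable fun y => g (y + t • (e j : H)) := hg.comp (measurable_add_const _)
  have hmap := (hD.measurable_noise k).aemeasurable (μ := P)
  rw [integral_map hmap hgt.aestronglyMeasurable, integral_map hmap hg.aestronglyMeasurable]
  simp only [hshift]
  simp only [hη]
  refine (abs_integral_add_smul_translate_sub_le hZ (hD.measurable_coord j k) hind
    (hD.map_coord j k) hL (by norm_num) (hD.support_density_subset j) hg hB
    (b j • (e j : H)) (t / b j)).trans_eq ?_
  rw [abs_div, abs_of_pos hbpos]
  push_cast [Real.coe_toNNReal _ hbpos.le]
  ring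

theorem exists_abs_integral_add_projB_sub_le (hD : CondD P e η b ξ p) (hb : ∀ j, b j ≠ 0)
    (k N : ℕ) :
    ∃ C : ℝ≥0, ∀ (g : H → ℝ) (B : ℝ), Measurable g → (∀ x, |g x| ≤ B) → ∀ v : H,
      |∫ y, g (y + projB e N v) ∂(P.map (η k)) - ∫ y, g y ∂(P.map (η k))| ≤ C * ‖v‖ * B := by
  induction N with
  | zero => exact ⟨0, fun g B _ _ v => by simp [projB]⟩
  | succ N ih =>
    obtain ⟨C, hC⟩ := ih
    obtain ⟨C', hC'⟩ := hD.exists_abs_integral_add_smul_sub_le (hb N) k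
    refine ⟨C' + C, fun g B hg hB v => ?_⟩
    have hB0 : 0 ≤ B := (abs_nonneg _).trans (hB 0)
    have hsplit (y : H) : g (y + projB e (N + 1) v)
        = g (y + e.repr v N • (e N : H) + projB e N v) := by
      rw [projB, Finset.sum_range_succ, ← projB, add_assoc, add_comm (projB e N v)]
    simp only [hsplit]
    calc _ ≤ _ := abs_sub_le _ (∫ y, g (y + projB e N v) ∂(P.map (η k))) _
      _ ≤ C' * |e.repr v N| * B + C * ‖v‖ * B :=
        add_le_add (hC' (fun y => g (y + projB e N v)) B (hg.comp (measurable_add_const _))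
          (fun x => hB _) _) (hC g B hg hB v)
      _ ≤ C' * ‖v‖ * B + C * ‖v‖ * B := by
        gcongr
        exact abs_repr_le_norm e v N
      _ = ↑(C' + C) * ‖v‖ * B := by push_cast; ring

omit [CompleteSpace H] [SecondCountableTopology H] [BorelSpace H] [IsProbabilityMeasure P] in
theorem inner_noise (hD : CondD P e η b ξ p) (j k : ℕ) (ω : Ω) :
    inner ℝ (e j : H) (η k ω) = b j * ξ j k ω := by
  refine ((hD.hasSum k ω).mapL (innerSL ℝ (e j : H))).unique
    ((hasSum_ite_eq j (b j * ξ j k ω)).congr_fun fun i => ?_)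
  simp only [innerSL_apply_apply, inner_smul_right, orthonormal_iff_ite.1 e.orthonormal]
  by_cases hij : i = j
  · simp [hij]
  · simp [hij, Ne.symm hij]

omit [CompleteSpace H] [SecondCountableTopology H] [BorelSpace H] [IsProbabilityMeasure P] in
theorem hasSum_sq_norm_noise (hD : CondD P e η b ξ p) (k : ℕ) (ω : Ω) :
    HasSum (fun j => b j ^ 2 * ξ j k ω ^ 2) (‖η k ω‖ ^ 2) := by
  have hparseval := e.hasSum_inner_mul_inner (η k ω) (η k ω)
  simp only [real_inner_comm (e _ : H) (η k ω), hD.inner_noise,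
    real_inner_self_eq_norm_sq] at hparseval
  exact hparseval.congr_fun fun j => by ring

omit [CompleteSpace H] [SecondCountableTopology H] [BorelSpace H] [IsProbabilityMeasure P] in
theorem measure_coord_preimage_pos (hD : CondD P e η b ξ p) (j k : ℕ) {U : Set ℝ}
    (hU : IsOpen U) (h0 : (0 : ℝ) ∈ U) : 0 < P (ξ j k ⁻¹' U) := by
  have hp := hD.continuous_density j
  rw [← Measure.map_apply (hD.measurable_coord j k) hU.measurableSet, hD.map_coord,
    pos_iff_ne_zero, Ne, withDensity_apply_eq_zero hp.measurable.ennreal_ofReal]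
  have hopen : 0 < volume ({x | 0 < p j x} ∩ U) :=
    ((isOpen_lt continuous_const hp).inter hU).measure_pos _ ⟨0, hD.density_zero_pos j, h0⟩
  refine (hopen.trans_le (measure_mono (Set.inter_subset_inter_left U fun x hx => ?_))).ne'
  simpa using hx

omit [CompleteSpace H] [SecondCountableTopology H] [BorelSpace H] [IsProbabilityMeasure P] in
theorem ae_sq_coord_le_one (hD : CondD P e η b ξ p) (j k : ℕ) :
    ∀ᵐ ω ∂P, ξ j k ω ^ 2 ≤ 1 := by
  refine ae_of_ae_map (hD.measurable_coord j k).aemeasurable (p := fun x => x ^ 2 ≤ 1) ?_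
  rw [hD.map_coord, ae_withDensity_iff (hD.continuous_density j).measurable.ennreal_ofReal]
  refine ae_of_all _ fun x hx => ?_
  have hpx : p j x ≠ 0 := fun h => hx (by simp [h])
  exact (sq_le_one_iff_abs_le_one x).2 (abs_le.2 (hD.support_density_subset j hpx))

omit [CompleteSpace H] [SecondCountableTopology H] [BorelSpace H] [IsProbabilityMeasure P] in
theorem measure_forall_sq_coord_lt_pos (hD : CondD P e η b ξ p) (k N : ℕ) {δ : ℝ} (hδ : 0 < δ) :
    0 < P {ω | ∀ j < N, ξ j k ω ^ 2 < δ} := by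
  have hopen : IsOpen {x : ℝ | x ^ 2 < δ} := isOpen_lt (by fun_prop) continuous_const
  have hinter : {ω | ∀ j < N, ξ j k ω ^ 2 < δ}
      = ⋂ j ∈ Finset.range N, ξ j k ⁻¹' {x | x ^ 2 < δ} := by
    ext ω
    simp
  rw [hinter, (hD.iIndepFun_coord_at k).measure_inter_preimage_eq_mul _
    fun _ _ => hopen.measurableSet, pos_iff_ne_zero, Finset.prod_ne_zero_iff]
  exact fun j _ => (hD.measure_coord_preimage_pos j k hopen (by simpa using hδ)).ne'

omit [IsProbabilityMeasure P] in
theorem zero_mem_msupp_noise (hD : CondD P e η b ξ p) (k : ℕ) :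
    (0 : H) ∈ msupp (P.map (η k)) := by
  intro U hU
  obtain ⟨ε, hε, hεU⟩ := Metric.mem_nhds_iff.1 hU
  refine lt_of_lt_of_le ?_ (measure_mono hεU)
  rw [Measure.map_apply (hD.measurable_noise k) Metric.isOpen_ball.measurableSet]
  have hlim : Tendsto (fun δ : ℝ => δ * ∑' j, b j ^ 2) (𝓝[>] 0) (𝓝 0) := by
    simpa using (continuous_mul_const (∑' j, b j ^ 2)).continuousWithinAt (s := Set.Ioi 0) (x := 0)
      |>.tendsto
  have hε2 : 0 < ε ^ 2 / 2 := by positivity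
  obtain ⟨δ, hδ, hδpos⟩ := ((hlim.eventually (gt_mem_nhds hε2)).and self_mem_nhdsWithin).exists
  obtain ⟨N, hN⟩ := ((tendsto_sum_nat_add fun j => b j ^ 2).eventually (gt_mem_nhds hε2)).exists
  refine (hD.measure_forall_sq_coord_lt_pos k N hδpos).trans_le (measure_mono_ae ?_)
  filter_upwards [ae_all_iff.2 fun j => hD.ae_sq_coord_le_one j k] with ω hle hlt
  have hsum := hD.hasSum_sq_norm_noise k ω
  have hnorm : ‖η k ω‖ ^ 2 ≤ δ * ∑' j, b j ^ 2 + ∑' j, b (j + N) ^ 2 := by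
    rw [← hsum.tsum_eq]
    exact tsum_mul_le_mul_tsum_add_tsum_nat_add (fun j => sq_nonneg (b j)) hD.summable_sq
      hsum.summable hδpos.le (fun j hj => (hlt j hj).le) hle
  exact mem_ball_zero_iff.2 (lt_of_pow_lt_pow_left₀ 2 hε.le (by linarith))

end CondD

end Noise

section TransitionOperator

variable {E : Type*} [NormedAddCommGroup E] [MeasurableSpace E]

/-- `D` is invariant under the random map `u ↦ S u + y`, where `y` ranges over the support of the
noise law `ν`. -/
structure IsInvariantSystem (S : E → E) (ν : Measure E) (D : Set E) : Prop where
  continuous : Continuous S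
  add_mem {u y : E} : u ∈ D → y ∈ msupp ν → S u + y ∈ D

/-- The noise law, as a measure on its support. -/
def lawOnSupport (ν : Measure E) : Measure (msupp ν) := ν.comap Subtype.val

variable [BorelSpace E] [SecondCountableTopology E]

instance (ν : Measure E) [IsProbabilityMeasure ν] : IsProbabilityMeasure (lawOnSupport ν) := by
  refine ⟨?_⟩
  rw [lawOnSupport, comap_subtype_coe_apply (measurableSet_msupp ν), Set.image_univ,
    Subtype.range_coe]
  exact (prob_compl_eq_zero_iff (measurableSet_msupp ν)).1 (ae_mem_msupp ν)

theorem integral_lawOnSupport (ν : Measure E) (g : E → ℝ) :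
    ∫ y, g y ∂(lawOnSupport ν) = ∫ y, g y ∂ν := by
  rw [lawOnSupport, integral_subtype_comap (measurableSet_msupp ν),
    setIntegral_eq_integral_of_ae_compl_eq_zero]
  filter_upwards [ae_mem_msupp ν] with y hy hny using absurd hy hny

theorem lawOnSupport_pos_of_isOpen (ν : Measure E) {U : Set (msupp ν)} (hU : IsOpen U)
    (hne : U.Nonempty) : 0 < lawOnSupport ν U := by
  obtain ⟨O, hO, rfl⟩ := isOpen_induced_iff.1 hU
  obtain ⟨y, hy⟩ := hne
  rw [lawOnSupport, comap_subtype_coe_apply (measurableSet_msupp ν),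
    Subtype.image_preimage_coe, Set.inter_comm,
    measure_inter_conull (t := msupp ν) (ae_mem_msupp ν)]
  exact y.2 O (hO.mem_nhds hy)

namespace IsInvariantSystem

variable {S : E → E} {ν : Measure E} {D : Set E}

omit [BorelSpace E] [SecondCountableTopology E] in
theorem attain_subset (h : IsInvariantSystem S ν D) {B : Set E} (hB : B ⊆ D) (n : ℕ) :
    attain S (msupp ν) B n ⊆ D := by
  induction n with
  | zero => exact hB
  | succ n ih =>
    rintro _ ⟨_, ⟨w, hw, rfl⟩, y, hy, rfl⟩
    exact h.add_mem (ih hw) hy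

/-- One step of the random dynamics on the invariant set, driven by the noise value `y`. -/
def step (h : IsInvariantSystem S ν D) (u : D) (y : msupp ν) : D :=
  ⟨S u + y, h.add_mem u.2 y.2⟩

omit [BorelSpace E] [SecondCountableTopology E] in
theorem continuous_step (h : IsInvariantSystem S ν D) :
    Continuous fun uy : D × msupp ν => h.step uy.1 uy.2 := by
  have := h.continuous
  unfold step
  fun_prop

variable [CompactSpace D] [IsProbabilityMeasure ν]

theorem integrable_step (h : IsInvariantSystem S ν D) (f : C(D, ℝ)) (u : D) :
    Integrable (fun y => f (h.step u y)) (lawOnSupport ν) := by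
  have := h.continuous_step
  exact Integrable.of_bound (Continuous.aestronglyMeasurable (by fun_prop)) ‖f‖
    (Eventually.of_forall fun y => f.norm_coe_le_norm _)

/-- The Markov operator `f ↦ 𝔼 f(S u + η)` of the random dynamics on the invariant set. -/
def transitionOperator (h : IsInvariantSystem S ν D) : C(D, ℝ) →L[ℝ] C(D, ℝ) :=
  LinearMap.mkContinuous
    { toFun f := ⟨fun u => ∫ y, f (h.step u y) ∂(lawOnSupport ν), by
        have := h.continuous_step
        exact continuous_of_dominated (fun u => (h.integrable_step f u).1)
          (fun u => Eventually.of_forall fun y => f.norm_coe_le_norm _) (integrable_const ‖f‖)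
          (Eventually.of_forall fun y => by fun_prop)⟩
      map_add' f g := ContinuousMap.ext fun u =>
        integral_add (h.integrable_step f u) (h.integrable_step g u)
      map_smul' c f := ContinuousMap.ext fun u => integral_const_mul c _ }
    1 fun f => by
      rw [one_mul, ContinuousMap.norm_le _ (norm_nonneg f)]
      intro u
      simpa using norm_integral_le_of_norm_le_const (μ := lawOnSupport ν)
        (Eventually.of_forall fun y => f.norm_coe_le_norm (h.step u y))

theorem transitionOperator_apply (h : IsInvariantSystem S ν D) (f : C(D, ℝ)) (u : D) :
    h.transitionOperator f u = ∫ y, f (h.step u y) ∂(lawOnSupport ν) := rfl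

theorem transitionOperator_apply_eq_integral (h : IsInvariantSystem S ν D) {f : C(D, ℝ)}
    {g : E → ℝ} (hg : ∀ x : D, g x = f x) (u : D) :
    h.transitionOperator f u = ∫ y, g (S u + y) ∂ν := by
  rw [transitionOperator_apply, ← integral_lawOnSupport ν fun y => g (S u + y)]
  exact integral_congr_ae (Eventually.of_forall fun y => (hg _).symm)

theorem isMarkovOperator_transitionOperator (h : IsInvariantSystem S ν D) :
    IsMarkovOperator h.transitionOperator where
  monotone f g hfg u :=
    integral_mono (h.integrable_step f u) (h.integrable_step g u) fun y => hfg (h.step u y)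
  map_one := by
    ext u
    simp [transitionOperator_apply]

theorem transitionOperator_apply_pos (h : IsInvariantSystem S ν D) {f : C(D, ℝ)} (hf : 0 ≤ f)
    {u : D} {y : msupp ν} (hy : 0 < f (h.step u y)) : 0 < h.transitionOperator f u := by
  have hcont : Continuous fun z => f (h.step u z) := by
    have := h.continuous_step
    fun_prop
  have hnonneg : 0 ≤ fun z => f (h.step u z) := fun z => hf (h.step u z)
  rw [transitionOperator_apply,
    integral_pos_iff_support_of_nonneg hnonneg (h.integrable_step f u)]
  exact lawOnSupport_pos_of_isOpen ν hcont.isOpen_support ⟨y, hy.ne'⟩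

theorem feynmanKac_apply_pos (h : IsInvariantSystem S ν D) (V : C(D, ℝ)) {f : C(D, ℝ)}
    (hf : 0 ≤ f) {u : D} {y : msupp ν} (hy : 0 < f (h.step u y)) :
    0 < feynmanKac h.transitionOperator V f u := by
  have hnonneg : 0 ≤ expMap V * f := fun x =>
    mul_nonneg (Real.exp_pos (V x)).le (show 0 ≤ f x from hf x)
  exact h.transitionOperator_apply_pos hnonneg (mul_pos (Real.exp_pos (V (h.step u y))) hy)

theorem feynmanKac_pow_apply_pos_of_mem_attain (h : IsInvariantSystem S ν D) (V : C(D, ℝ))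
    {u : D} (l : ℕ) : ∀ {f : C(D, ℝ)}, 0 ≤ f → ∀ {v : D},
      (v : E) ∈ attain S (msupp ν) {(u : E)} l → 0 < f v →
        0 < (feynmanKac h.transitionOperator V ^ l) f u := by
  induction l with
  | zero =>
    intro f _ v hv hfv
    rwa [← Subtype.ext hv]
  | succ l ih =>
    rintro f hf ⟨_, _⟩ ⟨_, ⟨w, hw, rfl⟩, y, hy, rfl⟩ hfv
    have hwD : w ∈ D := h.attain_subset (Set.singleton_subset_iff.2 u.2) l hw
    have hTf : 0 ≤ feynmanKac h.transitionOperator V f := by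
      simpa using monotone_feynmanKac h.isMarkovOperator_transitionOperator V hf
    rw [pow_succ]
    exact ih hTf (v := ⟨w, hwD⟩) hw (h.feynmanKac_apply_pos V hf (y := ⟨y, hy⟩) hfv)

end IsInvariantSystem

theorem iterate_mem_attain {E : Type*} [AddCommGroup E] {S : E → E} {K : Set E}
    (h0 : (0 : E) ∈ K) (u : E) (n : ℕ) : S^[n] u ∈ attain S K {u} n := by
  induction n with
  | zero => rfl
  | succ n ih =>
    rw [Function.iterate_succ_apply', ← add_zero (S _)]
    exact Set.add_mem_add ⟨_, ih, rfl⟩ h0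

/-- The noise steers the origin into any open set meeting the domain of attainability, and
switching the noise off brings every point of the domain close to the origin. -/
theorem isIrreducibleOperator_feynmanKac_attainDom {S : E → E} {ν : Measure E}
    [IsProbabilityMeasure ν] [CompactSpace (attainDom S (msupp ν) {0})]
    (h : IsInvariantSystem S ν (attainDom S (msupp ν) {0})) (h0 : (0 : E) ∈ msupp ν)
    (hcontr : ∀ δ > 0, ∃ n, ∀ u ∈ attainDom S (msupp ν) {0}, ‖S^[n] u‖ ≤ δ)
    (V : C(attainDom S (msupp ν) {0}, ℝ)) :
    IsIrreducibleOperator (feynmanKac h.transitionOperator V) := by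
  intro f hf hf0
  let o : attainDom S (msupp ν) {0} := ⟨0, subset_attainDom S _ _ rfl⟩
  obtain ⟨l, hl⟩ : ∃ l, 0 < (feynmanKac h.transitionOperator V ^ l) f o := by
    obtain ⟨x, hx⟩ := DFunLike.ne_iff.1 hf0
    obtain ⟨O, hO, hOf⟩ := isOpen_induced_iff.1 (isOpen_lt continuous_const f.continuous)
    have hpos : ∀ v : attainDom S (msupp ν) {0}, (v : E) ∈ O ↔ 0 < f v := Set.ext_iff.1 hOf
    obtain ⟨v, hvO, hv⟩ := mem_closure_iff.1 x.2 O hO ((hpos x).2 (lt_of_le_of_ne (hf x) hx.symm))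
    obtain ⟨l, hl⟩ := Set.mem_iUnion.1 hv
    exact ⟨l, h.feynmanKac_pow_apply_pos_of_mem_attain V l hf
      (v := ⟨v, attain_subset_attainDom S _ _ l hl⟩) hl ((hpos _).1 hvO)⟩
  set g := (feynmanKac h.transitionOperator V ^ l) f
  have hg : 0 ≤ g := (map_zero (feynmanKac h.transitionOperator V ^ l)).symm.le.trans
    (monotone_pow_of_monotone
      (monotone_feynmanKac h.isMarkovOperator_transitionOperator V) l hf)
  obtain ⟨δ, hδ, hgδ⟩ := Metric.eventually_nhds_iff.1
    (g.continuous.continuousAt.eventually (lt_mem_nhds hl))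
  obtain ⟨n, hn⟩ := hcontr (δ / 2) (half_pos hδ)
  refine ⟨n + l, fun u => ?_⟩
  have hit := iterate_mem_attain (S := S) h0 (u : E) n
  rw [pow_add]
  refine h.feynmanKac_pow_apply_pos_of_mem_attain V n hg
    (v := ⟨_, h.attain_subset (Set.singleton_subset_iff.2 u.2) n hit⟩) hit (hgδ ?_)
  rw [Subtype.dist_eq, dist_zero_right]
  exact (hn u u.2).trans_lt (half_lt_self hδ)

end TransitionOperator

section DoeblinFortet

theorem exists_lipschitzWith_truncation {B : ℝ} (hB : 0 ≤ B) :
    ∃ c : ℝ → ℝ, LipschitzWith 1 c ∧ (∀ x, |c x| ≤ B) ∧ ∀ x, |x| ≤ B → c x = x :=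
  ⟨fun x => Set.projIcc (-B) B (neg_le_self hB) x,
    (LipschitzWith.projIcc (neg_le_self hB)).weaken le_rfl,
    fun x => abs_le.2 (Set.projIcc (-B) B (neg_le_self hB) x).2,
    fun _ hx => congrArg Subtype.val (Set.projIcc_of_mem (neg_le_self hB) (abs_le.1 hx))⟩

theorem exists_lipschitzWith_extension {X : Type*} [PseudoMetricSpace X] {s : Set X} {f : s → ℝ}
    {L : ℝ≥0} (hf : LipschitzWith L f) {B : ℝ} (hB : 0 ≤ B) (hfB : ∀ x, |f x| ≤ B) :
    ∃ g : X → ℝ, LipschitzWith L g ∧ (∀ x, |g x| ≤ B) ∧ ∀ x : s, g x = f x := by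
  obtain ⟨c, hc, hcle, hceq⟩ := exists_lipschitzWith_truncation hB
  have hext : LipschitzOnWith L (Function.extend (↑) f fun _ => 0) s := by
    rw [lipschitzOnWith_iff_restrict]
    convert hf using 1
    exact Function.extend_comp Subtype.val_injective f _
  obtain ⟨g, hg, hgf⟩ := hext.extend_real
  refine ⟨c ∘ g, (hc.comp hg).weaken (one_mul L).le, fun x => hcle _, fun x => ?_⟩
  rw [Function.comp_apply, ← hgf x.2, Subtype.val_injective.extend_apply, hceq _ (hfB x)]

omit [CompleteSpace H] in
theorem projB_add (e : HilbertBasis ℕ ℝ H) (N : ℕ) (u v : H) :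
    projB e N (u + v) = projB e N u + projB e N v := by
  simp only [← projL_apply, map_add]

omit [CompleteSpace H] in
theorem projB_projB_of_le (e : HilbertBasis ℕ ℝ H) {M N : ℕ} (hMN : M ≤ N) (v : H) :
    projB e M (projB e N v) = projB e M v := by
  refine Finset.sum_congr rfl fun j hj => ?_
  have hjN : j ∈ Finset.range N := Finset.range_mono hMN hj
  rw [e.repr_apply_apply, projB, inner_sum]
  simp [inner_smul_right, orthonormal_iff_ite.1 e.orthonormal, Finset.mem_range.1 hjN]

theorem abs_integral_add_left_sub_le {E : Type*} [NormedAddCommGroup E] [MeasurableSpace E]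
    [BorelSpace E] [SecondCountableTopology E] {ν : Measure E} [IsProbabilityMeasure ν]
    {G : E → ℝ} (hG : Continuous G) {π : E → E} {L B C : ℝ} (hB : ∀ x, |G x| ≤ B)
    (hGπ : ∀ x d, |G (x + d) - G (x + π d)| ≤ L * ‖d - π d‖)
    (hshift : ∀ (g : E → ℝ) (B : ℝ), Measurable g → (∀ x, |g x| ≤ B) → ∀ v,
      |∫ y, g (y + π v) ∂ν - ∫ y, g y ∂ν| ≤ C * ‖v‖ * B) (a a' : E) :
    |∫ y, G (a + y) ∂ν - ∫ y, G (a' + y) ∂ν| ≤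
      L * ‖a - a' - π (a - a')‖ + C * ‖a - a'‖ * B := by
  have hint (z : E) : Integrable (fun y => G (z + y)) ν :=
    Integrable.of_bound (by fun_prop) B (Eventually.of_forall fun y => hB _)
  have hhigh : |∫ y, G (a + y) ∂ν - ∫ y, G (a' + π (a - a') + y) ∂ν| ≤
      L * ‖a - a' - π (a - a')‖ := by
    rw [← integral_sub (hint _) (hint _), ← Real.norm_eq_abs]
    refine (norm_integral_le_of_norm_le_const (Eventually.of_forall fun y => ?_)).trans_eq
      (by rw [probReal_univ, mul_one])
    have hGy := hGπ (a' + y) (a - a')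
    rwa [show a' + y + (a - a') = a + y by abel,
      show a' + y + π (a - a') = a' + π (a - a') + y by abel] at hGy
  have hlow : |∫ y, G (a' + π (a - a') + y) ∂ν - ∫ y, G (a' + y) ∂ν| ≤ C * ‖a - a'‖ * B := by
    simpa only [add_assoc, add_comm (π (a - a'))] using
      hshift (fun y => G (a' + y)) B (by fun_prop) (fun y => hB _) (a - a')
  exact (abs_sub_le _ _ _).trans (add_le_add hhigh hlow)

omit [CompleteSpace H] in
/-- Since `V` only depends on the first `M` modes, `e^V f` extends to a function whose increments
in the higher modes are controlled by the Lipschitz constant of `f` alone. -/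
theorem exists_extension_expMap_mul {e : HilbertBasis ℕ ℝ H} {D : Set H} [CompactSpace D]
    {V : C(D, ℝ)} {F : H → ℝ} {M N : ℕ} (hF : Continuous F) (hVF : ∀ u : D, V u = F (projB e M u))
    (hMN : M ≤ N) {f : C(D, ℝ)} {L : ℝ≥0} (hf : LipschitzWith L f) :
    ∃ G : H → ℝ, Continuous G ∧ (∀ x : D, G x = (expMap V * f) x) ∧
      (∀ x, |G x| ≤ Real.exp ‖V‖ * ‖f‖) ∧
      ∀ x d, |G (x + d) - G (x + projB e N d)| ≤ Real.exp ‖V‖ * L * ‖d - projB e N d‖ := by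
  obtain ⟨c, hc, hcle, hceq⟩ := exists_lipschitzWith_truncation (norm_nonneg V)
  obtain ⟨g, hg, hgle, hgf⟩ :=
    exists_lipschitzWith_extension hf (norm_nonneg f) f.norm_coe_le_norm
  have hexp (x : H) : |Real.exp (c (F (projB e M x)))| ≤ Real.exp ‖V‖ := by
    rw [Real.abs_exp]
    exact Real.exp_le_exp.2 ((le_abs_self _).trans (hcle _))
  refine ⟨fun x => Real.exp (c (F (projB e M x))) * g x, ?_, fun x => ?_, fun x => ?_,
    fun x d => ?_⟩
  · simp only [← projL_apply]
    exact (Real.continuous_exp.comp (hc.continuous.comp (hF.comp (projL e M).continuous))).mul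
      hg.continuous
  · beta_reduce
    rw [← hVF, hceq _ (V.norm_coe_le_norm x), hgf]
    rfl
  · rw [abs_mul]
    gcongr
    exacts [hexp x, hgle x]
  · have hproj : projB e M (x + projB e N d) = projB e M (x + d) := by
      rw [projB_add, projB_projB_of_le e hMN, ← projB_add]
    beta_reduce
    rw [hproj, ← mul_sub, abs_mul, mul_assoc]
    gcongr
    · exact hexp _
    · simpa [dist_eq_norm] using hg.dist_le_mul (x + d) (x + projB e N d)

variable [SecondCountableTopology H] [MeasurableSpace H] [BorelSpace H]

omit [CompleteSpace H] in
theorem lipschitzWith_feynmanKac_apply {e : HilbertBasis ℕ ℝ H} {S : H → H} {ν : Measure H}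
    [IsProbabilityMeasure ν] {D : Set H} [CompactSpace D] (h : IsInvariantSystem S ν D)
    {M N : ℕ} (hMN : M ≤ N) {C L₀ γ : ℝ≥0}
    (hshift : ∀ (g : H → ℝ) (B : ℝ), Measurable g → (∀ x, |g x| ≤ B) → ∀ v,
      |∫ y, g (y + projB e N v) ∂ν - ∫ y, g y ∂ν| ≤ C * ‖v‖ * B)
    (hL₀ : ∀ u ∈ D, ∀ v ∈ D, ‖S u - S v‖ ≤ L₀ * ‖u - v‖)
    (hγ : ∀ u ∈ D, ∀ v ∈ D, ‖S u - S v - projB e N (S u - S v)‖ ≤ γ * ‖u - v‖)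
    {V : C(D, ℝ)} {F : H → ℝ} (hF : Continuous F) (hVF : ∀ u : D, V u = F (projB e M u))
    {f : C(D, ℝ)} {L : ℝ≥0} (hf : LipschitzWith L f) :
    LipschitzWith ((Real.exp ‖V‖).toNNReal * γ * L + (Real.exp ‖V‖).toNNReal * C * L₀ * ‖f‖₊)
      (feynmanKac h.transitionOperator V f) := by
  obtain ⟨G, hGc, hGf, hGB, hGN⟩ := exists_extension_expMap_mul hF hVF hMN hf
  refine LipschitzWith.of_dist_le_mul fun u u' => ?_
  rw [feynmanKac_apply, h.transitionOperator_apply_eq_integral hGf,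
    h.transitionOperator_apply_eq_integral hGf, Real.dist_eq, Subtype.dist_eq, dist_eq_norm]
  calc |∫ y, G (S u + y) ∂ν - ∫ y, G (S u' + y) ∂ν|
      ≤ Real.exp ‖V‖ * L * ‖S u - S u' - projB e N (S u - S u')‖ +
          C * ‖S u - S u'‖ * (Real.exp ‖V‖ * ‖f‖) :=
        abs_integral_add_left_sub_le hGc hGB hGN hshift _ _
    _ ≤ Real.exp ‖V‖ * L * (γ * ‖(u : H) - u'‖) +
          C * (L₀ * ‖(u : H) - u'‖) * (Real.exp ‖V‖ * ‖f‖) := by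
        gcongr
        exacts [hγ u u.2 u' u'.2, hL₀ u u.2 u' u'.2]
    _ = _ := by
        push_cast [Real.coe_toNNReal _ (Real.exp_pos _).le]
        ring

theorem CondD.exists_isDoeblinFortet {Ω : Type*} [MeasurableSpace Ω] {P : Measure Ω}
    [IsProbabilityMeasure P] {e : HilbertBasis ℕ ℝ H} {η : ℕ → Ω → H} {b : ℕ → ℝ}
    {ξ : ℕ → ℕ → Ω → ℝ} {p : ℕ → ℝ → ℝ} {S : H → H} (hD : CondD P e η b ξ p) (hb : ∀ j, b j ≠ 0)
    (hC : CondC S e) {k : ℕ} {D : Set H} [CompactSpace D] [IsProbabilityMeasure (P.map (η k))]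
    (h : IsInvariantSystem S (P.map (η k)) D) {V : C(D, ℝ)} {M : ℕ} {F : H → ℝ}
    (hF : Continuous F) (hVF : ∀ u : D, V u = F (projB e M u))
    (hirr : IsIrreducibleOperator (feynmanKac h.transitionOperator V)) :
    ∃ a q C : ℝ≥0, IsDoeblinFortet (feynmanKac h.transitionOperator V) a q C := by
  obtain ⟨R, hR, hDR⟩ := (isCompact_iff_compactSpace.2 ‹_› : IsCompact D).isBounded
    |>.subset_closedBall_lt 0 0
  obtain ⟨L₀, hL₀⟩ := hC.exists_norm_sub_le hR
  obtain ⟨γ, hγpos, -, hγlim, hγ⟩ := hC R hR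
  have hsmall : ∀ᶠ N in atTop, γ N < Real.exp (-‖V‖) / Real.exp ‖V‖ :=
    hγlim.eventually (gt_mem_nhds (by positivity))
  obtain ⟨N, hγN, hMN⟩ := (hsmall.and (eventually_ge_atTop M)).exists
  obtain ⟨C, hshift⟩ := hD.exists_abs_integral_add_projB_sub_le hb k N
  have hmarkov := h.isMarkovOperator_transitionOperator
  refine ⟨(Real.exp (-‖V‖)).toNNReal, (Real.exp ‖V‖).toNNReal * (γ N).toNNReal,
    (Real.exp ‖V‖).toNNReal * C * L₀, monotone_feynmanKac hmarkov V, hirr, fun x => ?_, ?_,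
    lipschitzWith_feynmanKac_apply h hMN hshift
      (fun u hu v hv => hL₀ u (hDR hu) v (hDR hv)) (fun u hu v hv => ?_) hF hVF⟩
  · rw [Real.coe_toNNReal _ (Real.exp_pos _).le]
    simpa using (feynmanKac_apply_mem_Icc hmarkov V zero_le_one
      (fun x => ⟨le_rfl, le_rfl⟩ : ∀ x, (1 : C(D, ℝ)) x ∈ Set.Icc 1 1) x).1
  · rw [← Real.toNNReal_mul (Real.exp_pos _).le,
      Real.toNNReal_lt_toNNReal_iff (Real.exp_pos _)]
    rwa [lt_div_iff₀' (Real.exp_pos _)] at hγN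
  · rw [Real.coe_toNNReal _ (hγpos N).le]
    exact hγ N u (hDR hu) v (hDR hv)

end DoeblinFortet

section Trajectory

/-- A bounded continuous extension of a function on a compact set, given by Tietze's theorem. -/
def tietzeExtension {E : Type*} [MetricSpace E] {D : Set E} [CompactSpace D] (f : C(D, ℝ)) :
    E →ᵇ ℝ :=
  (exists_extension_norm_eq_of_isClosedEmbedding (mkOfCompact f)
    (isCompact_iff_compactSpace.2 ‹_›).isClosed.isClosedEmbedding_subtypeVal).choose

@[simp]
theorem restrict_tietzeExtension {E : Type*} [MetricSpace E] {D : Set E} [CompactSpace D]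
    (f : C(D, ℝ)) : (tietzeExtension f).toContinuousMap.restrict D = f :=
  ContinuousMap.ext fun x => congrFun
    (exists_extension_norm_eq_of_isClosedEmbedding (mkOfCompact f)
      (isCompact_iff_compactSpace.2 ‹_›).isClosed.isClosedEmbedding_subtypeVal).choose_spec.2 x

theorem tietzeExtension_apply {E : Type*} [MetricSpace E] {D : Set E} [CompactSpace D]
    (f : C(D, ℝ)) (x : D) : tietzeExtension f x = f x :=
  DFunLike.congr_fun (restrict_tietzeExtension f) x

variable [SecondCountableTopology H] [MeasurableSpace H] [BorelSpace H]
  {Ω : Type*} [MeasurableSpace Ω] {P : Measure Ω} {S : H → H} {e : HilbertBasis ℕ ℝ H}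
  {η : ℕ → Ω → H} {b : ℕ → ℝ} {ξ : ℕ → ℕ → Ω → ℝ} {p : ℕ → ℝ → ℝ}

namespace CondD

theorem measurable_traj_sigmaGenerated (hD : CondD P e η b ξ p) (hS : Continuous S) (u : H)
    {k l : ℕ} (hkl : k ≤ l) :
    Measurable[sigmaGenerated (fun jm : ℕ × ℕ => ξ jm.1 jm.2) {jm | jm.2 ≤ l}]
      (traj S η (fun _ => u) k) := by
  induction k with
  | zero => exact measurable_const
  | succ k ih =>
    exact (hS.measurable.comp (ih (Nat.le_of_succ_le hkl))).add
      (hD.measurable_noise_sigmaGenerated fun _ => hkl)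

theorem measurable_traj_prodMk_exp_sum_sigmaGenerated (hD : CondD P e η b ξ p)
    (hS : Continuous S) (W : H →ᵇ ℝ) (u : H) (k : ℕ) :
    Measurable[sigmaGenerated (fun jm : ℕ × ℕ => ξ jm.1 jm.2) {jm | jm.2 ≤ k}]
      fun ω => (traj S η (fun _ => u) k ω,
        Real.exp (∑ n ∈ Finset.Icc 1 k, W (traj S η (fun _ => u) n ω))) :=
  (hD.measurable_traj_sigmaGenerated hS u le_rfl).prodMk <|
    Real.measurable_exp.comp <| Finset.measurable_fun_sum _ fun _ hn =>
      W.continuous.measurable.comp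
        (hD.measurable_traj_sigmaGenerated hS u (Finset.mem_Icc.1 hn).2)

theorem ae_traj_mem (hD : CondD P e η b ξ p) {D : Set H}
    (h : IsInvariantSystem S (P.map (η 1)) D) {u : H} (hu : u ∈ D) (k : ℕ) :
    ∀ᵐ ω ∂P, traj S η (fun _ => u) k ω ∈ D := by
  induction k with
  | zero => exact Eventually.of_forall fun _ => hu
  | succ k ih =>
    have hnoise : ∀ᵐ ω ∂P, η (k + 1) ω ∈ msupp (P.map (η 1)) := by
      rw [hD.map_noise_eq 1 (k + 1)]
      exact ae_of_ae_map (hD.measurable_noise (k + 1)).aemeasurable (ae_mem_msupp _)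
    filter_upwards [ih, hnoise] with ω hω hηω using h.add_mem hω hηω

variable [IsProbabilityMeasure P]

theorem integral_traj_succ (hD : CondD P e η b ξ p) (hS : Continuous S) (W G : H →ᵇ ℝ) (u : H)
    (k : ℕ) :
    ∫ ω, G (traj S η (fun _ => u) (k + 1) ω) *
      Real.exp (∑ n ∈ Finset.Icc 1 k, W (traj S η (fun _ => u) n ω)) ∂P =
    ∫ ω, (∫ y, G (S (traj S η (fun _ => u) k ω) + y) ∂(P.map (η 1))) *
      Real.exp (∑ n ∈ Finset.Icc 1 k, W (traj S η (fun _ => u) n ω)) ∂P := by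
  set U := traj S η fun _ => u
  set weight : Ω → ℝ := fun ω => Real.exp (∑ n ∈ Finset.Icc 1 k, W (U n ω))
  have hpast := hD.measurable_traj_prodMk_exp_sum_sigmaGenerated hS W u k
  have hcoord : ∀ jm : ℕ × ℕ, Measurable (ξ jm.1 jm.2) := fun jm => hD.measurable_coord _ _
  have hind : IndepFun (fun ω => (U k ω, weight ω)) (η (k + 1)) P :=
    indepFun_of_disjoint_sigmaGenerated (B := {jm | jm.2 = k + 1}) hcoord hD.iIndepFun_coord
      (Set.disjoint_left.2 fun jm (hle : jm.2 ≤ k) (heq : jm.2 = k + 1) => by omega)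
      hpast (hD.measurable_noise_sigmaGenerated fun _ => rfl)
  have hpast_meas := hpast.mono (sigmaGenerated_le hcoord _) le_rfl
  have hweight : Integrable weight P := by
    refine Integrable.of_bound (measurable_snd.comp hpast_meas).aestronglyMeasurable
      (Real.exp (∑ _n ∈ Finset.Icc 1 k, ‖W‖)) (ae_of_all _ fun ω => ?_)
    rw [Real.norm_eq_abs, Real.abs_exp]
    gcongr
    exact (le_abs_self _).trans (W.norm_coe_le_norm _)
  have hF : Measurable (Function.uncurry fun (z : H × ℝ) y => G (S z.1 + y) * z.2) :=
    Continuous.measurable (by unfold Function.uncurry; fun_prop)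
  have hstep := integral_comp_eq_integral_integral_of_indepFun hpast_meas
    (hD.measurable_noise (k + 1)) hind hF <|
      hweight.bdd_mul (c := ‖G‖) (G.continuous.measurable.comp ((hS.measurable.comp
        (measurable_fst.comp hpast_meas)).add (hD.measurable_noise (k + 1)))).aestronglyMeasurable
        (ae_of_all _ fun ω => G.norm_coe_le_norm _)
  simp only [integral_mul_const, hD.map_noise_eq (k + 1) 1] at hstep
  exact hstep

theorem integral_traj_eq_feynmanKac_pow (hD : CondD P e η b ξ p) {D : Set H} [CompactSpace D]
    [IsProbabilityMeasure (P.map (η 1))] (h : IsInvariantSystem S (P.map (η 1)) D)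
    (W : H →ᵇ ℝ) (u : D) (k : ℕ) (g : H →ᵇ ℝ) :
    ∫ ω, g (traj S η (fun _ => (u : H)) k ω) *
      Real.exp (∑ n ∈ Finset.Icc 1 k, W (traj S η (fun _ => (u : H)) n ω)) ∂P =
    (feynmanKac h.transitionOperator (W.toContinuousMap.restrict D) ^ k)
      (g.toContinuousMap.restrict D) u := by
  induction k generalizing g with
  | zero => simp [traj]
  | succ k ih =>
    set U := traj S η fun _ => (u : H)
    set T := feynmanKac h.transitionOperator (W.toContinuousMap.restrict D)
    set f := g.toContinuousMap.restrict D
    let G := tietzeExtension (expMap (W.toContinuousMap.restrict D) * f)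
    have hG (x : D) : G x = Real.exp (W x) * g x := tietzeExtension_apply _ x
    have hT (x : D) : ∫ y, G (S x + y) ∂(P.map (η 1)) = T f x :=
      (h.transitionOperator_apply_eq_integral (tietzeExtension_apply _) x).symm
    calc ∫ ω, g (U (k + 1) ω) * Real.exp (∑ n ∈ Finset.Icc 1 (k + 1), W (U n ω)) ∂P
        = ∫ ω, G (U (k + 1) ω) * Real.exp (∑ n ∈ Finset.Icc 1 k, W (U n ω)) ∂P := by
          refine integral_congr_ae ?_
          filter_upwards [hD.ae_traj_mem h u.2 (k + 1)] with ω hω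
          rw [hG ⟨_, hω⟩, Finset.sum_Icc_succ_top (by omega), Real.exp_add]
          ring
      _ = ∫ ω, (∫ y, G (S (U k ω) + y) ∂(P.map (η 1))) *
            Real.exp (∑ n ∈ Finset.Icc 1 k, W (U n ω)) ∂P :=
          hD.integral_traj_succ h.continuous W G u k
      _ = ∫ ω, tietzeExtension (T f) (U k ω) *
            Real.exp (∑ n ∈ Finset.Icc 1 k, W (U n ω)) ∂P := by
          refine integral_congr_ae ?_
          filter_upwards [hD.ae_traj_mem h u.2 k] with ω hω
          rw [hT ⟨_, hω⟩, tietzeExtension_apply (T f) ⟨_, hω⟩]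
      _ = (T ^ (k + 1)) f u := by
          rw [ih, restrict_tietzeExtension, pow_succ]
          rfl

end CondD

end Trajectory

section CarriedMeasures

theorem map_withDensity_comp {α β : Type*} [MeasurableSpace α] [MeasurableSpace β] (μ : Measure α)
    {f : α → β} (hf : Measurable f) {r : β → ℝ≥0∞} (hr : Measurable r) :
    (μ.withDensity (r ∘ f)).map f = (μ.map f).withDensity r := by
  ext s hs
  rw [Measure.map_apply hf hs, withDensity_apply _ (hf hs), withDensity_apply _ hs,
    setLIntegral_map hs hr hf]
  rfl

theorem exists_isProbabilityMeasure_map_subtype_val_eq {α : Type*} [MeasurableSpace α] {D : Set α}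
    (hD : MeasurableSet D) {σ : Measure α} [IsProbabilityMeasure σ] (hσ : σ D = 1) :
    ∃ τ : Measure D, IsProbabilityMeasure τ ∧ τ.map Subtype.val = σ := by
  refine ⟨σ.comap Subtype.val, ⟨?_⟩, ?_⟩
  · rwa [comap_subtype_coe_apply hD, Set.image_univ, Subtype.range_coe]
  · rw [map_comap_subtype_coe hD]
    exact Measure.restrict_eq_self_of_ae_mem ((prob_compl_eq_zero_iff hD).2 hσ)

theorem map_subtype_val_apply_self {α : Type*} [MeasurableSpace α] {D : Set α}
    (hD : MeasurableSet D) (τ : Measure D) [IsProbabilityMeasure τ] :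
    τ.map Subtype.val D = 1 := by
  rw [Measure.map_apply measurable_subtype_coe hD, Subtype.coe_preimage_self, measure_univ]

variable {E : Type*} [MetricSpace E] [MeasurableSpace E] [BorelSpace E] {D : Set E}

theorem integral_map_subtype_val (τ : Measure D) (W : E →ᵇ ℝ) :
    ∫ x, W x ∂(τ.map Subtype.val) = ∫ x, W.toContinuousMap.restrict D x ∂τ :=
  integral_map measurable_subtype_coe.aemeasurable W.continuous.measurable.aestronglyMeasurable

theorem integral_map_subtype_val_tietzeExtension [CompactSpace D] (τ : Measure D) (h : C(D, ℝ)) :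
    ∫ x, tietzeExtension h x ∂(τ.map Subtype.val) = ∫ x, h x ∂τ := by
  rw [integral_map_subtype_val, restrict_tietzeExtension]

theorem map_subtype_val_withDensity_tietzeExtension [CompactSpace D] (μ : Measure D)
    (h : C(D, ℝ)) :
    (μ.withDensity fun x => ENNReal.ofReal (h x)).map Subtype.val =
      (μ.map Subtype.val).withDensity fun x => ENNReal.ofReal (tietzeExtension h x) := by
  rw [← map_withDensity_comp μ measurable_subtype_coe
    (tietzeExtension h).continuous.measurable.ennreal_ofReal]
  simp only [Function.comp_def, tietzeExtension_apply]

theorem isProbabilityMeasure_withDensity_tietzeExtension [CompactSpace D] (μ : Measure D)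
    (h : C(D, ℝ)) [IsProbabilityMeasure (μ.withDensity fun x => ENNReal.ofReal (h x))] :
    IsProbabilityMeasure
      ((μ.map Subtype.val).withDensity fun x => ENNReal.ofReal (tietzeExtension h x)) := by
  rw [← map_subtype_val_withDensity_tietzeExtension]
  exact Measure.isProbabilityMeasure_map measurable_subtype_coe.aemeasurable

/-- The Legendre transform `I(σ) = sup_W (⟨W, σ⟩ - Q(W))`. Negative values are truncated to `0`,
which is harmless as soon as `Q 0 = 0`. -/
def legendreTransform (Q : (E →ᵇ ℝ) → ℝ) (σ : Measure E) : ℝ≥0∞ :=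
  ⨆ W : E →ᵇ ℝ, ENNReal.ofReal (∫ x, W x ∂σ - Q W)

omit [BorelSpace E] in
theorem eq_integral_sub_legendreTransform_iff {Q : (E →ᵇ ℝ) → ℝ} (hQ : Q 0 = 0) (V : E →ᵇ ℝ)
    (σ : Measure E) :
    (legendreTransform Q σ ≠ ⊤ ∧ Q V = ∫ x, V x ∂σ - (legendreTransform Q σ).toReal) ↔
      ∀ W : E →ᵇ ℝ, ∫ x, W x ∂σ - Q W ≤ ∫ x, V x ∂σ - Q V := by
  have hle (W : E →ᵇ ℝ) : ENNReal.ofReal (∫ x, W x ∂σ - Q W) ≤ legendreTransform Q σ :=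
    le_iSup (fun W : E →ᵇ ℝ => ENNReal.ofReal (∫ x, W x ∂σ - Q W)) W
  constructor
  · rintro ⟨hfin, heq⟩ W
    have := (ENNReal.ofReal_le_iff_le_toReal hfin).1 (hle W)
    linarith
  · intro hmax
    have hnonneg : 0 ≤ ∫ x, V x ∂σ - Q V := by simpa [hQ] using hmax 0
    have hsup : legendreTransform Q σ = ENNReal.ofReal (∫ x, V x ∂σ - Q V) :=
      le_antisymm (iSup_le fun W => ENNReal.ofReal_le_ofReal (hmax W)) (hle V)
    rw [hsup, ENNReal.toReal_ofReal hnonneg]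
    exact ⟨ENNReal.ofReal_ne_top, by ring⟩

/-- `σ` is carried by `D` and realises the variational principle `Q V = ⟨V, σ⟩ - I(σ)`. -/
def IsEquilibriumOn (D : Set E) (Q : (E →ᵇ ℝ) → ℝ) (V : E →ᵇ ℝ) (σ : Measure E) : Prop :=
  σ D = 1 ∧ legendreTransform Q σ ≠ ⊤ ∧ Q V = ∫ x, V x ∂σ - (legendreTransform Q σ).toReal

theorem isEquilibriumOn_map_subtype_val_iff [CompactSpace D] {Q : (E →ᵇ ℝ) → ℝ}
    {Q' : C(D, ℝ) → ℝ} (hQ : ∀ W, Q W = Q' (W.toContinuousMap.restrict D)) (hQ' : Q' 0 = 0)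
    (V : E →ᵇ ℝ) (τ : Measure D) [IsProbabilityMeasure τ] :
    IsEquilibriumOn D Q V (τ.map Subtype.val) ↔
      IsEquilibrium Q' (V.toContinuousMap.restrict D) τ := by
  have hD : MeasurableSet D := (isCompact_iff_compactSpace.2 ‹_›).measurableSet
  have hQ0 : Q 0 = 0 := (hQ 0).trans hQ'
  rw [IsEquilibriumOn, eq_integral_sub_legendreTransform_iff hQ0,
    and_iff_right (map_subtype_val_apply_self hD τ)]
  simp only [hQ, integral_map_subtype_val]
  refine ⟨fun hmax W => ?_, fun hmax W => hmax _⟩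
  simpa only [restrict_tietzeExtension] using hmax (tietzeExtension W)

theorem isEquilibriumOn_iff_eq_withDensity [CompactSpace D] {Q : (E →ᵇ ℝ) → ℝ}
    {Q' : C(D, ℝ) → ℝ} (hQ : ∀ W, Q W = Q' (W.toContinuousMap.restrict D)) (hQ' : Q' 0 = 0)
    {V : E →ᵇ ℝ} {μ : Measure D} {h : C(D, ℝ)}
    [IsProbabilityMeasure (μ.withDensity fun x => ENNReal.ofReal (h x))]
    (hiff : ∀ τ : Measure D, IsProbabilityMeasure τ →
      (IsEquilibrium Q' (V.toContinuousMap.restrict D) τ ↔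
        τ = μ.withDensity fun x => ENNReal.ofReal (h x)))
    (σ : Measure E) [IsProbabilityMeasure σ] :
    IsEquilibriumOn D Q V σ ↔
      σ = (μ.map Subtype.val).withDensity fun x => ENNReal.ofReal (tietzeExtension h x) := by
  have hD : MeasurableSet D := (isCompact_iff_compactSpace.2 ‹_›).measurableSet
  rw [← map_subtype_val_withDensity_tietzeExtension]
  constructor
  · intro hσ
    obtain ⟨τ, hτ, rfl⟩ := exists_isProbabilityMeasure_map_subtype_val_eq hD hσ.1
    rw [(hiff τ hτ).1 ((isEquilibriumOn_map_subtype_val_iff hQ hQ' V τ).1 hσ)]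
  · rintro rfl
    exact (isEquilibriumOn_map_subtype_val_iff hQ hQ' V _).2 ((hiff _ inferInstance).2 rfl)

end CarriedMeasures

section DualSemigroup

theorem measurable_map_add {α E Ω : Type*} [MeasurableSpace α] [MeasurableSpace E] [Add E]
    [MeasurableAdd₂ E] [MeasurableSpace Ω] {P : Measure Ω} [SFinite P] {S : α → E} {X : Ω → E}
    (hS : Measurable S) (hX : Measurable X) : Measurable fun u => P.map fun ω => S u + X ω := by
  have hadd : Measurable fun q : α × Ω => S q.1 + X q.2 :=
    (hS.comp measurable_fst).add (hX.comp measurable_snd)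
  refine Measure.measurable_of_measurable_coe _ fun s hs => ?_
  simp_rw [fun u => Measure.map_apply (μ := P) (hX.const_add (S u)) hs]
  exact measurable_measure_prodMk_left (hadd hs)

theorem lintegral_exp_mul_eq_ofReal_feynmanKac {E : Type*} [NormedAddCommGroup E]
    [SecondCountableTopology E] [MeasurableSpace E] [BorelSpace E] {S : E → E} {ν : Measure E}
    [IsProbabilityMeasure ν] {D : Set E} [CompactSpace D] (h : IsInvariantSystem S ν D)
    (V : E →ᵇ ℝ) (f : E →ᵇ ℝ≥0) {g : C(D, ℝ)} (hg : ∀ x : D, g x = f x) (u : D) :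
    ∫⁻ y, ENNReal.ofReal (Real.exp (V (S u + y))) * f (S u + y) ∂ν =
      ENNReal.ofReal
        (feynmanKac h.transitionOperator (V.toContinuousMap.restrict D) g u) := by
  have hf : Integrable (fun y => (f (S u + y) : ℝ)) ν :=
    (f.compContinuous ⟨fun y => S u + y, by fun_prop⟩).integrable_of_nnreal _
  have hint : Integrable (fun y => Real.exp (V (S u + y)) * f (S u + y)) ν :=
    hf.bdd_mul (c := Real.exp ‖V‖)
      (Continuous.aestronglyMeasurable (by fun_prop)) <| ae_of_all _ fun y => by
        rw [Real.norm_eq_abs, Real.abs_exp]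
        exact Real.exp_le_exp.2 ((le_abs_self _).trans (V.norm_coe_le_norm _))
  have hstep := h.transitionOperator_apply_eq_integral
    (f := expMap (V.toContinuousMap.restrict D) * g) (g := fun x => Real.exp (V x) * f x)
    (fun x => congrArg (Real.exp (V x) * ·) (hg x).symm) u
  rw [feynmanKac_apply, hstep, ofReal_integral_eq_lintegral_ofReal hint
    (ae_of_all _ fun y => by positivity)]
  refine lintegral_congr fun y => ?_
  rw [ENNReal.ofReal_mul (Real.exp_pos _).le, ENNReal.ofReal_coe_nnreal]

variable [SecondCountableTopology H] [MeasurableSpace H] [BorelSpace H]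
  {Ω : Type} [MeasurableSpace Ω] {P : Measure Ω} [IsProbabilityMeasure P] {S : H → H}
  {η : ℕ → Ω → H}

theorem lintegral_dualFK1 (hS : Measurable S) (hη : Measurable (η 1)) {V : H → ℝ}
    (hV : Measurable V) (μ : Measure H) {f : H → ℝ≥0∞} (hf : Measurable f) :
    ∫⁻ x, f x ∂(dualFK1 P S η V μ) =
      ∫⁻ u, ∫⁻ y, ENNReal.ofReal (Real.exp (V (S u + y))) * f (S u + y) ∂(P.map (η 1)) ∂μ := by
  have hexp : Measurable fun x => ENNReal.ofReal (Real.exp (V x)) := hV.exp.ennreal_ofReal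
  have hprod := hexp.mul hf
  rw [dualFK1, lintegral_withDensity_eq_lintegral_mul _ hexp hf,
    Measure.lintegral_bind (measurable_map_add hS hη).aemeasurable hprod.aemeasurable]
  refine lintegral_congr fun u => ?_
  rw [lintegral_map hprod (hη.const_add (S u))]
  exact (lintegral_map (hprod.comp (measurable_const_add (S u))) hη).symm

variable {D : Set H} [CompactSpace D] [IsProbabilityMeasure (P.map (η 1))]

theorem lintegral_dualFK1_map_subtype_val (hη : Measurable (η 1))
    (h : IsInvariantSystem S (P.map (η 1)) D) (V : H →ᵇ ℝ) (μ : Measure D) [IsFiniteMeasure μ]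
    {lam : ℝ} (hlam : 0 ≤ lam)
    (hμ : ∀ f : C(D, ℝ), ∫ x, feynmanKac h.transitionOperator
      (V.toContinuousMap.restrict D) f x ∂μ = lam * ∫ x, f x ∂μ) (f : H →ᵇ ℝ≥0) :
    ∫⁻ x, f x ∂(dualFK1 P S η V (μ.map Subtype.val)) =
      ENNReal.ofReal lam * ∫⁻ x, f x ∂(μ.map Subtype.val) := by
  have hfm : Measurable fun x => (f x : ℝ≥0∞) := f.continuous.measurable.coe_nnreal_ennreal
  let g : C(D, ℝ) := ⟨fun x => f x, by fun_prop⟩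
  have hg : 0 ≤ g := fun x => NNReal.coe_nonneg _
  have hTg : 0 ≤ feynmanKac h.transitionOperator (V.toContinuousMap.restrict D) g := by
    simpa using monotone_feynmanKac h.isMarkovOperator_transitionOperator
      (V.toContinuousMap.restrict D) hg
  have hSm := h.continuous.measurable
  have hint : Measurable fun p : H × H =>
      ENNReal.ofReal (Real.exp (V (S p.1 + p.2))) * f (S p.1 + p.2) :=
    (V.continuous.measurable.exp.ennreal_ofReal.mul hfm).comp
      ((hSm.comp measurable_fst).add measurable_snd)
  rw [lintegral_dualFK1 hSm hη V.continuous.measurable _ hfm,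
    lintegral_map hint.lintegral_prod_right' measurable_subtype_coe,
    lintegral_map hfm measurable_subtype_coe]
  calc _ = ∫⁻ u, ENNReal.ofReal
        (feynmanKac h.transitionOperator (V.toContinuousMap.restrict D) g u) ∂μ :=
        lintegral_congr fun u => lintegral_exp_mul_eq_ofReal_feynmanKac h V f (fun x => rfl) u
    _ = ENNReal.ofReal (lam * ∫ x, g x ∂μ) := by
        rw [← ofReal_integral_eq_lintegral_ofReal (integrable_continuousMap μ _)
          (ae_of_all _ hTg), hμ]
    _ = _ := by
        rw [ENNReal.ofReal_mul hlam, ofReal_integral_eq_lintegral_ofReal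
          (integrable_continuousMap μ g) (ae_of_all _ hg)]
        exact congrArg _ (lintegral_congr fun x => ENNReal.ofReal_coe_nnreal)

theorem dualFK1_map_subtype_val_eq_smul (hη : Measurable (η 1))
    (h : IsInvariantSystem S (P.map (η 1)) D) (V : H →ᵇ ℝ) (μ : Measure D) [IsFiniteMeasure μ]
    {lam : ℝ} (hlam : 0 ≤ lam)
    (hμ : ∀ f : C(D, ℝ), ∫ x, feynmanKac h.transitionOperator
      (V.toContinuousMap.restrict D) f x ∂μ = lam * ∫ x, f x ∂μ) :
    dualFK1 P S η V (μ.map Subtype.val) = ENNReal.ofReal lam • μ.map Subtype.val := by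
  have key := lintegral_dualFK1_map_subtype_val hη h V μ hlam hμ
  have : IsFiniteMeasure (ENNReal.ofReal lam • μ.map (Subtype.val : D → H)) :=
    Measure.smul_finite _ ENNReal.ofReal_ne_top
  have : IsFiniteMeasure (dualFK1 P S η V (μ.map Subtype.val)) := by
    refine ⟨?_⟩
    have htotal := key 1
    simp only [BoundedContinuousFunction.coe_one, Pi.one_apply, ENNReal.coe_one,
      lintegral_one] at htotal
    rw [htotal]
    exact ENNReal.mul_lt_top ENNReal.ofReal_lt_top (measure_lt_top _ _)
  refine ext_of_forall_lintegral_eq_of_IsFiniteMeasure fun f => ?_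
  rw [key, lintegral_smul_measure, smul_eq_mul]

end DualSemigroup

section AttainableDomain

theorem isInvariantSystem_attainDom {E : Type*} [NormedAddCommGroup E] [MeasurableSpace E]
    {S : E → E} (hS : Continuous S) (ν : Measure E) (B : Set E) :
    IsInvariantSystem S ν (attainDom S (msupp ν) B) :=
  ⟨hS, add_mem_attainDom hS⟩

variable [SecondCountableTopology H] [MeasurableSpace H] [BorelSpace H]
  {Ω : Type} [MeasurableSpace Ω] {P : Measure Ω} [IsProbabilityMeasure P] {S : H → H}
  {e : HilbertBasis ℕ ℝ H} {η : ℕ → Ω → H} {b : ℕ → ℝ} {ξ : ℕ → ℕ → Ω → ℝ} {p : ℕ → ℝ → ℝ}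
  [IsProbabilityMeasure (P.map (η 1))]

theorem CondD.FK_one_tietzeExtension (hD : CondD P e η b ξ p) {D : Set H} [CompactSpace D]
    (h : IsInvariantSystem S (P.map (η 1)) D) (V : H →ᵇ ℝ) (g : C(D, ℝ)) (u : D) :
    FK P S η V 1 (tietzeExtension g) u =
      feynmanKac h.transitionOperator (V.toContinuousMap.restrict D) g u := by
  rw [FK, hD.integral_traj_eq_feynmanKac_pow h V u 1 (tietzeExtension g),
    restrict_tietzeExtension, pow_one]

theorem CondD.exists_isPressure (hD : CondD P e η b ξ p) {D : Set H} [CompactSpace D] [Nonempty D]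
    (h : IsInvariantSystem S (P.map (η 1)) D) {Q : (H →ᵇ ℝ) → ℝ}
    (hQ : ∀ W : H →ᵇ ℝ, ∀ u ∈ D, Tendsto (fun k : ℕ => (k : ℝ)⁻¹ * Real.log
      (∫ ω, Real.exp (∑ n ∈ Finset.Icc 1 k, W (traj S η (fun _ => u) n ω)) ∂P))
        atTop (𝓝 (Q W))) :
    ∃ Q' : C(D, ℝ) → ℝ, IsPressure h.transitionOperator Q' ∧ Q' 0 = 0 ∧
      ∀ W, Q W = Q' (W.toContinuousMap.restrict D) := by
  obtain ⟨u⟩ := ‹Nonempty D›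
  have hlim (W : H →ᵇ ℝ) (u : D) : Tendsto (fun k : ℕ => (k : ℝ)⁻¹ * Real.log
      ((feynmanKac h.transitionOperator (W.toContinuousMap.restrict D) ^ k) 1 u))
        atTop (𝓝 (Q W)) := by
    refine (hQ W u u.2).congr fun k => ?_
    have hone := hD.integral_traj_eq_feynmanKac_pow h W u k 1
    simp only [BoundedContinuousFunction.coe_one, Pi.one_apply, one_mul] at hone
    rw [hone]
    rfl
  have hrestrict {W W' : H →ᵇ ℝ}
      (hW : W.toContinuousMap.restrict D = W'.toContinuousMap.restrict D) : Q W = Q W' :=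
    tendsto_nhds_unique (hlim W u) (hW ▸ hlim W' u)
  refine ⟨fun W => Q (tietzeExtension W), fun W u => ?_, ?_, fun W => ?_⟩
  · simpa only [restrict_tietzeExtension] using hlim (tietzeExtension W) u
  · have hzero : Q 0 = 0 := tendsto_nhds_unique (hQ 0 u u.2) (by simp)
    exact (hrestrict (restrict_tietzeExtension 0)).trans hzero
  · exact hrestrict (restrict_tietzeExtension _).symm

theorem CondD.exists_isDoeblinFortet_attainDom (hD : CondD P e η b ξ p) (hb : ∀ j, b j ≠ 0)
    (hK : IsCompact (msupp (P.map (η 1)))) (hA : CondA S) (hB : CondB S (msupp (P.map (η 1))))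
    (hC : CondC S e) [CompactSpace (attainDom S (msupp (P.map (η 1))) {0})]
    (h : IsInvariantSystem S (P.map (η 1)) (attainDom S (msupp (P.map (η 1))) {0}))
    {V : C(attainDom S (msupp (P.map (η 1))) {0}, ℝ)} {N : ℕ} {F : H → ℝ} (hF : Continuous F)
    (hVF : ∀ u : attainDom S (msupp (P.map (η 1))) {0}, V u = F (projB e N u)) :
    ∃ a q C, IsDoeblinFortet (feynmanKac h.transitionOperator V) a q C := by
  refine hD.exists_isDoeblinFortet hb hC h hF hVF
    (isIrreducibleOperator_feynmanKac_attainDom h (hD.zero_mem_msupp_noise 1) (fun δ hδ => ?_) V)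
  obtain ⟨R, -, hR⟩ := hB.exists_attainDom_subset_closedBall h.continuous hK
  obtain ⟨n, hn⟩ := hA.exists_norm_iterate_le R hδ
  exact ⟨n, fun u hu => hn u (hR hu)⟩

end AttainableDomain

/-- **Uniqueness of the equilibrium state (Property 2, Section 4)**: under Conditions (A)–(D)
with `b_j ≠ 0`, for every `V` in the dense class `𝒱` (functions depending continuously on
finitely many Fourier modes) there is a unique measure `σ_V ∈ 𝒫(𝒜)` with
`Q(V) = ⟨V,σ_V⟩ - I(σ_V)`, where `I` is the Legendre transform of `Q`; moreover
`σ_V = h_V μ_V` with `(λ_V, h_V, μ_V)` the eigen-triple of the Feynman–Kac semigroup: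
`𝔓₁^V h_V = λ_V h_V`, `𝔓₁^{V*} μ_V = λ_V μ_V`, `⟨h_V, μ_V⟩ = 1`. -/
theorem statement2
    {H : Type} [NormedAddCommGroup H] [InnerProductSpace ℝ H] [CompleteSpace H]
    [SecondCountableTopology H] [MeasurableSpace H] [BorelSpace H]
    {Ω : Type} [MeasurableSpace Ω] (P : Measure Ω) [IsProbabilityMeasure P]
    (S : H → H) (e : HilbertBasis ℕ ℝ H)
    (η : ℕ → Ω → H) (hηmeas : ∀ k, Measurable (η k))
    (b : ℕ → ℝ) (ξ : ℕ → ℕ → Ω → ℝ) (p : ℕ → ℝ → ℝ)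
    (K : Set H) (hK : K = msupp (Measure.map (η 1) P)) (hKcomp : IsCompact K)
    (hA : CondA S) (hB : CondB S K) (hC : CondC S e) (hD : CondD P e η b ξ p)
    (hb : ∀ j, b j ≠ 0)
    -- `Q(V) = lim_k k⁻¹ log 𝔼_u exp(∑_{n=1}^k V(u_n))`, independent of `u ∈ 𝒜`
    (Q : (H →ᵇ ℝ) → ℝ)
    (hQ : ∀ W : H →ᵇ ℝ, ∀ u ∈ attainDom S K ({0} : Set H),
      Tendsto (fun k : ℕ => (k : ℝ)⁻¹ *
          Real.log (∫ ω,
            Real.exp (∑ n ∈ Finset.Icc 1 k, W (traj S η (fun _ => u) n ω)) ∂P))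
        atTop (𝓝 (Q W)))
    -- `V` belongs to the class `𝒱`
    (V : H →ᵇ ℝ)
    (hV : ∃ N : ℕ, ∃ F : H → ℝ, Continuous F ∧
      ∀ u ∈ attainDom S K ({0} : Set H), V u = F (projB e N u)) :
    ∃ lam : ℝ, 0 < lam ∧ ∃ hV' : H →ᵇ ℝ, ∃ μV : ProbabilityMeasure H,
      (∀ x ∈ attainDom S K ({0} : Set H), 0 < hV' x) ∧
      (∀ u ∈ attainDom S K ({0} : Set H), FK P S η (⇑V) 1 (⇑hV') u = lam * hV' u) ∧
      dualFK1 P S η (⇑V) (μV : Measure H) = ENNReal.ofReal lam • (μV : Measure H) ∧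
      (μV : Measure H) (attainDom S K ({0} : Set H)) = 1 ∧
      (∫ x, hV' x ∂(μV : Measure H)) = 1 ∧
      (∃! σ : ProbabilityMeasure H,
        (σ : Measure H) (attainDom S K ({0} : Set H)) = 1 ∧
        (⨆ W : (H →ᵇ ℝ), ENNReal.ofReal ((∫ x, W x ∂(σ : Measure H)) - Q W)) ≠ ⊤ ∧
        Q V = (∫ x, V x ∂(σ : Measure H)) -
          (⨆ W : (H →ᵇ ℝ),
            ENNReal.ofReal ((∫ x, W x ∂(σ : Measure H)) - Q W)).toReal) ∧
      ∀ σ : ProbabilityMeasure H,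
        ((σ : Measure H) (attainDom S K ({0} : Set H)) = 1 ∧
          (⨆ W : (H →ᵇ ℝ), ENNReal.ofReal ((∫ x, W x ∂(σ : Measure H)) - Q W)) ≠ ⊤ ∧
          Q V = (∫ x, V x ∂(σ : Measure H)) -
            (⨆ W : (H →ᵇ ℝ),
              ENNReal.ofReal ((∫ x, W x ∂(σ : Measure H)) - Q W)).toReal) →
        (σ : Measure H)
          = (μV : Measure H).withDensity fun x => ENNReal.ofReal (hV' x) := by
  subst hK
  set D := attainDom S (msupp (P.map (η 1))) {0}
  have h : IsInvariantSystem S (P.map (η 1)) D := isInvariantSystem_attainDom hA.continuous _ _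
  have hDcomp : IsCompact D := isCompact_attainDom hA.continuous hKcomp hB hC
  have : CompactSpace D := isCompact_iff_compactSpace.1 hDcomp
  have : Nonempty D := ⟨0, subset_attainDom S _ _ rfl⟩
  have := Measure.isProbabilityMeasure_map (μ := P) (hD.measurable_noise 1).aemeasurable
  obtain ⟨N, F, hF, hVF⟩ := hV
  obtain ⟨a, q, C, hT⟩ := hD.exists_isDoeblinFortet_attainDom hb hKcomp hA hB hC h
    (V := V.toContinuousMap.restrict D) hF fun u => hVF u u.2
  obtain ⟨Q', hQ', hQ'0, hQQ'⟩ := hD.exists_isPressure h hQ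
  obtain ⟨lam, g, μ, hlam, hμ, ht, hiff⟩ :=
    hQ'.exists_isEigentriple_forall_isEquilibrium_iff h.isMarkovOperator_transitionOperator hT
  have := isProbabilityMeasure_withDensity_ofReal (fun x => (ht.pos x).le) ht.integral_eq_one
  have hσV := isProbabilityMeasure_withDensity_tietzeExtension μ g
  have hequil (σ : ProbabilityMeasure H) := isEquilibriumOn_iff_eq_withDensity hQQ' hQ'0 hiff σ
  have hg {u : H} (hu : u ∈ D) : tietzeExtension g u = g ⟨u, hu⟩ := tietzeExtension_apply g ⟨u, hu⟩
  exact ⟨lam, hlam, tietzeExtension g,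
    ⟨μ.map Subtype.val, Measure.isProbabilityMeasure_map measurable_subtype_coe.aemeasurable⟩,
    fun u hu => hg hu ▸ ht.pos ⟨u, hu⟩,
    fun u hu => hg hu ▸ (hD.FK_one_tietzeExtension h V g ⟨u, hu⟩).trans
      (DFunLike.congr_fun ht.apply_eq _),
    dualFK1_map_subtype_val_eq_smul (hD.measurable_noise 1) h V μ hlam.le ht.integral_apply,
    map_subtype_val_apply_self hDcomp.measurableSet μ,
    (integral_map_subtype_val_tietzeExtension μ g).trans ht.integral_eq_one,
    ⟨⟨_, hσV⟩, (hequil _).2 rfl, fun σ hσ => Subtype.ext ((hequil σ).1 hσ)⟩,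
    fun σ => (hequil σ).1⟩
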